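/- arXiv:1802.02499 — 6 statements merged into one kernel-verified Lean document; each statement's English description precedes it below -/
import Mathlib

section
/- Let (X,d,μ) be a coarse median space with parameters (ρ,κ₄,κ₅). Then the induced interval map I : X×X → P(X), (a,b) ↦ [a,b] = {μ(a,x,b) : x ∈ X}, satisfies: (I1) [a,a] = {a} and [a,b] = [b,a] for all a,b ∈ X; (I2) there is a non-decreasing function φ : ℝ≥0 → ℝ≥0 (one may take φ(R) = ρ(R)+κ₄) such that whenever c lies in the closed R-neighbourhood N_R([a,b]), one has [a,c] ⊆ N_{φ(R)}([a,b]); and (I3) there is a non-decreasing function ψ : ℝ≥0 → ℝ≥0 such that [a,b] ∩ [b,c] ∩ [c,a] ≠ ∅ for all a,b,c ∈ X and diam(N_R([a,b]) ∩ N_R([b,c]) ∩ N_R([c,a])) ≤ ψ(R) for all R ≥ 0. -/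
/-- The interval `[a,b]` associated to a ternary operator `μ`:
the set `{μ a x b : x ∈ X}`. -/
def cmInterval {X : Type*} (μ : X → X → X → X) (a b : X) : Set X :=
  {c | ∃ x, c = μ a x b}

/-- The closed `R`-neighbourhood of a set `A`. -/
def cmNbhd {X : Type*} [MetricSpace X] (R : ℝ) (A : Set X) : Set X :=
  {x | ∃ a ∈ A, dist x a ≤ R}

/-- A coarse median space with parameters `(ρ, κ₄, κ₅)`. -/
structure IsCoarseMedian {X : Type*} [MetricSpace X] (μ : X → X → X → X)
    (ρ : ℝ → ℝ) (κ₄ κ₅ : ℝ) : Prop where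
  M1 : ∀ a b : X, μ a a b = a
  M2₁ : ∀ a b c : X, μ a b c = μ a c b
  M2₂ : ∀ a b c : X, μ a b c = μ b a c
  ρ_mono : Monotone ρ
  C1 : ∀ a a' b b' c c' : X,
    dist (μ a b c) (μ a' b' c') ≤ ρ (dist a a' + dist b b' + dist c c')
  C2 : ∀ a b c d : X, dist (μ (μ a b c) b d) (μ a b (μ c b d)) ≤ κ₄
  C5 : ∀ a b c d e : X,
    dist (μ a b (μ c d e)) (μ (μ a b c) (μ a b d) e) ≤ κ₅

/-!
The map `x ↦ μ a x b` is a coarse retraction onto `[a,b]`: by (C2) it moves points of `[a,b]` by at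
most `κ₄`, and by (C1) it moves points near `[a,b]` a controlled amount. Axiom (I2) is (C2) read as
`μ a x (μ a z b) ≈ μ a (μ x a z) b`.

For (I3), the five-point condition says that if `x` is coarsely fixed by `μ p · a` and by `μ p · b`,
then it is coarsely fixed by `μ p · (μ a b c)`. Let `x` be coarsely fixed by the retractions onto
the three sides of a triangle with median `m = μ a b c`. Applying this with `p = a` and with `p = b`
shows that `x` is coarsely fixed by `μ m · a` and `μ m · b`; applying it once more with `p = m`
gives `m = μ m x m ≈ x`.
-/

section Neighbourhood

variable {X : Type*} [MetricSpace X] {R S : ℝ} {A B : Set X}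

lemma cmNbhd_subset_cmNbhd (hAB : A ⊆ B) : cmNbhd R A ⊆ cmNbhd R B :=
  fun _ ⟨a, ha, hxa⟩ => ⟨a, hAB ha, hxa⟩

lemma cmNbhd_cmNbhd_subset : cmNbhd R (cmNbhd S A) ⊆ cmNbhd (R + S) A :=
  fun _ ⟨_, ⟨a, ha, hya⟩, hxy⟩ => ⟨a, ha, (dist_triangle _ _ _).trans (add_le_add hxy hya)⟩

end Neighbourhood

/-- How far `x ↦ μ a x b` can move a point of the closed `R`-neighbourhood of `[a,b]`, in terms of
the parameters `ρ` and `κ₄`. -/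
def retractionError (ρ : ℝ → ℝ) (κ₄ R : ℝ) : ℝ :=
  ρ R + κ₄ + R

/-- How far `μ p · (μ a b c)` can move a point which `μ p · a` and `μ p · b` each move by at most
`K`, in terms of the parameters `ρ` and `κ₅`. -/
def medianError (ρ : ℝ → ℝ) (κ₅ K : ℝ) : ℝ :=
  κ₅ + ρ (K + K)

lemma monotone_retractionError {ρ : ℝ → ℝ} (hρ : Monotone ρ) (κ₄ : ℝ) :
    Monotone (retractionError ρ κ₄) :=
  (hρ.add_const κ₄).add monotone_id

lemma monotone_medianError {ρ : ℝ → ℝ} (hρ : Monotone ρ) (κ₅ : ℝ) :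
    Monotone (medianError ρ κ₅) :=
  (hρ.comp (monotone_id.add monotone_id)).const_add κ₅

namespace IsCoarseMedian

variable {X : Type*} [MetricSpace X] {μ : X → X → X → X} {ρ : ℝ → ℝ} {κ₄ κ₅ : ℝ}
  {a b c c' p x : X} {K R : ℝ}

lemma median_rotate (h : IsCoarseMedian μ ρ κ₄ κ₅) (a b c : X) : μ a b c = μ b c a := by
  rw [h.M2₂, h.M2₁]

lemma median_reverse (h : IsCoarseMedian μ ρ κ₄ κ₅) (a b c : X) : μ a b c = μ c b a := by
  rw [h.median_rotate, h.M2₂]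

lemma median_self_middle (h : IsCoarseMedian μ ρ κ₄ κ₅) (a x : X) : μ a x a = a := by
  rw [h.M2₁, h.M1]

lemma dist_median_right_le (h : IsCoarseMedian μ ρ κ₄ κ₅) (hc : dist c c' ≤ R) :
    dist (μ a b c) (μ a b c') ≤ ρ R :=
  (h.C1 a a b b c c').trans (h.ρ_mono (by simpa using hc))

lemma dist_median_le_of_dist_le (h : IsCoarseMedian μ ρ κ₄ κ₅) (ha : dist a x ≤ K)
    (hb : dist b x ≤ K) : dist (μ a b c) x ≤ ρ (K + K) :=
  calc dist (μ a b c) x = dist (μ a b c) (μ x x c) := by rw [h.M1]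
    _ ≤ ρ (dist a x + dist b x + dist c c) := h.C1 a x b x c c
    _ ≤ ρ (K + K) := h.ρ_mono (by simpa using add_le_add ha hb)

lemma cmInterval_self (h : IsCoarseMedian μ ρ κ₄ κ₅) (a : X) : cmInterval μ a a = {a} := by
  have : Nonempty X := ⟨a⟩
  ext c
  simp [cmInterval, h.median_self_middle]

lemma cmInterval_comm (h : IsCoarseMedian μ ρ κ₄ κ₅) (a b : X) :
    cmInterval μ a b = cmInterval μ b a := by
  ext c
  simp only [cmInterval, h.median_reverse a]

lemma median_mem_cmInterval_inter (h : IsCoarseMedian μ ρ κ₄ κ₅) (a b c : X) :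
    μ a b c ∈ cmInterval μ a b ∩ cmInterval μ b c ∩ cmInterval μ c a :=
  ⟨⟨⟨c, h.M2₁ a b c⟩, ⟨a, h.M2₂ a b c⟩⟩, ⟨b, h.median_reverse a b c⟩⟩

lemma cmInterval_subset_cmNbhd_of_dist_le (h : IsCoarseMedian μ ρ κ₄ κ₅) (hc : dist c c' ≤ R) :
    cmInterval μ a c ⊆ cmNbhd (ρ R) (cmInterval μ a c') := by
  rintro _ ⟨x, rfl⟩
  exact ⟨μ a x c', ⟨x, rfl⟩, h.dist_median_right_le hc⟩

lemma cmInterval_subset_cmNbhd_of_mem (h : IsCoarseMedian μ ρ κ₄ κ₅)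
    (hc : c ∈ cmInterval μ a b) : cmInterval μ a c ⊆ cmNbhd κ₄ (cmInterval μ a b) := by
  obtain ⟨z, rfl⟩ := hc
  rintro _ ⟨x, rfl⟩
  refine ⟨μ a (μ x a z) b, ⟨μ x a z, rfl⟩, ?_⟩
  calc dist (μ a x (μ a z b)) (μ a (μ x a z) b)
      = dist (μ (μ x a z) a b) (μ x a (μ z a b)) := by
        rw [dist_comm, h.M2₂ a (μ x a z), h.M2₂ a x, h.M2₂ a z]
    _ ≤ κ₄ := h.C2 x a z b

lemma cmInterval_subset_cmNbhd_of_mem_cmNbhd (h : IsCoarseMedian μ ρ κ₄ κ₅)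
    (hc : c ∈ cmNbhd R (cmInterval μ a b)) :
    cmInterval μ a c ⊆ cmNbhd (ρ R + κ₄) (cmInterval μ a b) := by
  obtain ⟨c', hc', hcc'⟩ := hc
  calc cmInterval μ a c ⊆ cmNbhd (ρ R) (cmInterval μ a c') :=
        h.cmInterval_subset_cmNbhd_of_dist_le hcc'
    _ ⊆ cmNbhd (ρ R) (cmNbhd κ₄ (cmInterval μ a b)) :=
        cmNbhd_subset_cmNbhd (h.cmInterval_subset_cmNbhd_of_mem hc')
    _ ⊆ cmNbhd (ρ R + κ₄) (cmInterval μ a b) := cmNbhd_cmNbhd_subset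

lemma dist_retraction_le_of_mem_cmInterval (h : IsCoarseMedian μ ρ κ₄ κ₅)
    (hx : x ∈ cmInterval μ a b) : dist (μ a x b) x ≤ κ₄ := by
  obtain ⟨z, rfl⟩ := hx
  calc dist (μ a (μ a z b) b) (μ a z b)
      = dist (μ (μ z a b) a b) (μ z a (μ b a b)) := by
        rw [h.median_self_middle b, h.M2₂ a z, h.M2₂ a (μ z a b)]
    _ ≤ κ₄ := h.C2 z a b b

lemma dist_retraction_le_of_mem_cmNbhd (h : IsCoarseMedian μ ρ κ₄ κ₅)
    (hx : x ∈ cmNbhd R (cmInterval μ a b)) : dist (μ a x b) x ≤ retractionError ρ κ₄ R := by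
  obtain ⟨y, hy, hxy⟩ := hx
  have retractions_close : dist (μ a x b) (μ a y b) ≤ ρ R := by
    rw [h.M2₁ a x, h.M2₁ a y]
    exact h.dist_median_right_le hxy
  calc dist (μ a x b) x ≤ dist (μ a x b) (μ a y b) + dist (μ a y b) y + dist y x :=
        dist_triangle4 _ _ _ _
    _ ≤ ρ R + κ₄ + R := by
        gcongr
        · exact h.dist_retraction_le_of_mem_cmInterval hy
        · rwa [dist_comm]

lemma dist_retraction_median_le (h : IsCoarseMedian μ ρ κ₄ κ₅) (ha : dist (μ p x a) x ≤ K)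
    (hb : dist (μ p x b) x ≤ K) : dist (μ p x (μ a b c)) x ≤ medianError ρ κ₅ K :=
  calc dist (μ p x (μ a b c)) x
      ≤ dist (μ p x (μ a b c)) (μ (μ p x a) (μ p x b) c) + dist (μ (μ p x a) (μ p x b) c) x :=
        dist_triangle _ _ _
    _ ≤ κ₅ + ρ (K + K) := add_le_add (h.C5 p x a b c) (h.dist_median_le_of_dist_le ha hb)

lemma dist_median_le_of_dist_retraction_le (h : IsCoarseMedian μ ρ κ₄ κ₅)
    (hab : dist (μ a x b) x ≤ K) (hbc : dist (μ b x c) x ≤ K) (hca : dist (μ c x a) x ≤ K) :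
    dist (μ a b c) x ≤ medianError ρ κ₅ (medianError ρ κ₅ K) := by
  have hma : dist (μ (μ a b c) x a) x ≤ medianError ρ κ₅ K := by
    rw [h.median_reverse _ x a, h.median_rotate a b c]
    exact h.dist_retraction_median_le hab (by rwa [h.median_reverse])
  have hmb : dist (μ (μ a b c) x b) x ≤ medianError ρ κ₅ K := by
    rw [h.median_reverse _ x b, h.median_rotate a b c, h.median_rotate b c a]
    exact h.dist_retraction_median_le hbc (by rwa [h.median_reverse])
  calc dist (μ a b c) x = dist (μ (μ a b c) x (μ a b c)) x := by rw [h.median_self_middle]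
    _ ≤ medianError ρ κ₅ (medianError ρ κ₅ K) := h.dist_retraction_median_le hma hmb

lemma dist_median_le_of_mem_cmNbhd_inter (h : IsCoarseMedian μ ρ κ₄ κ₅)
    (hx : x ∈ cmNbhd R (cmInterval μ a b) ∩ cmNbhd R (cmInterval μ b c) ∩
      cmNbhd R (cmInterval μ c a)) :
    dist (μ a b c) x ≤ medianError ρ κ₅ (medianError ρ κ₅ (retractionError ρ κ₄ R)) :=
  h.dist_median_le_of_dist_retraction_le (h.dist_retraction_le_of_mem_cmNbhd hx.1.1)
    (h.dist_retraction_le_of_mem_cmNbhd hx.1.2) (h.dist_retraction_le_of_mem_cmNbhd hx.2)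

end IsCoarseMedian

/-- in a coarse median space, the induced interval map satisfies the
axioms (I1), (I2), (I3) of a coarse interval space, where in (I2) one may take
`φ R = ρ R + κ₄`. -/
theorem stmt0 {X : Type*} [MetricSpace X] (μ : X → X → X → X)
    (ρ : ℝ → ℝ) (κ₄ κ₅ : ℝ) (h : IsCoarseMedian μ ρ κ₄ κ₅) :
    (∀ a : X, cmInterval μ a a = {a}) ∧
    (∀ a b : X, cmInterval μ a b = cmInterval μ b a) ∧
    (∃ φ : ℝ → ℝ, Monotone φ ∧ φ = (fun R => ρ R + κ₄) ∧
      ∀ (R : ℝ) (a b c : X), c ∈ cmNbhd R (cmInterval μ a b) →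
        cmInterval μ a c ⊆ cmNbhd (φ R) (cmInterval μ a b)) ∧
    (∃ ψ : ℝ → ℝ, Monotone ψ ∧
      (∀ a b c : X,
        (cmInterval μ a b ∩ cmInterval μ b c ∩ cmInterval μ c a).Nonempty) ∧
      (∀ (R : ℝ) (a b c x y : X),
        x ∈ cmNbhd R (cmInterval μ a b) ∩ cmNbhd R (cmInterval μ b c) ∩
            cmNbhd R (cmInterval μ c a) →
        y ∈ cmNbhd R (cmInterval μ a b) ∩ cmNbhd R (cmInterval μ b c) ∩
            cmNbhd R (cmInterval μ c a) →
        dist x y ≤ ψ R)) := by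
  refine ⟨h.cmInterval_self, h.cmInterval_comm,
    ⟨fun R => ρ R + κ₄, h.ρ_mono.add_const κ₄, rfl,
      fun _ _ _ _ => h.cmInterval_subset_cmNbhd_of_mem_cmNbhd⟩, ?_⟩
  let radius R := medianError ρ κ₅ (medianError ρ κ₅ (retractionError ρ κ₄ R))
  have radius_mono : Monotone radius :=
    (monotone_medianError h.ρ_mono κ₅).comp
      ((monotone_medianError h.ρ_mono κ₅).comp (monotone_retractionError h.ρ_mono κ₄))
  refine ⟨fun R => radius R + radius R, radius_mono.add radius_mono,
    fun a b c => ⟨μ a b c, h.median_mem_cmInterval_inter a b c⟩, fun R a b c x y hx hy => ?_⟩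
  calc dist x y ≤ dist (μ a b c) x + dist (μ a b c) y := dist_triangle_left x y (μ a b c)
    _ ≤ radius R + radius R :=
      add_le_add (h.dist_median_le_of_mem_cmNbhd_inter hx) (h.dist_median_le_of_mem_cmNbhd_inter hy)
end

section
/- Let (X,d,I) be a coarse interval space with parameters (φ,ψ) and let μ be an induced operator of I. Then for all a,a',b,c ∈ X, d(μ(a,b,c), μ(a',b,c)) ≤ ψ(φ(d(a,a'))). In particular μ satisfies the uniform bornology axiom (C1) with control function ρ = ψ∘φ. -/
/-- A coarse interval space with parameters `(φ, ψ)`. -/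
structure IsCoarseIntervalSpace {X : Type*} [MetricSpace X]
    (I : X → X → Set X) (φ ψ : ℝ → ℝ) : Prop where
  I1a : ∀ a : X, I a a = {a}
  I1b : ∀ a b : X, I a b = I b a
  φ_mono : Monotone φ
  I2 : ∀ (R : ℝ) (a b c : X), c ∈ cmNbhd R (I a b) →
    I a c ⊆ cmNbhd (φ R) (I a b)
  ψ_mono : Monotone ψ
  I3ne : ∀ a b c : X, (I a b ∩ I b c ∩ I c a).Nonempty
  I3diam : ∀ (R : ℝ) (a b c x y : X),
    x ∈ cmNbhd R (I a b) ∩ cmNbhd R (I b c) ∩ cmNbhd R (I c a) →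
    y ∈ cmNbhd R (I a b) ∩ cmNbhd R (I b c) ∩ cmNbhd R (I c a) →
    dist x y ≤ ψ R

/-- An induced (ternary) operator of an interval map `I` : for all `a b c`,
`μ a b c` lies in `[a,b] ∩ [b,c] ∩ [c,a]` and is invariant under permutations. -/
def IsInducedOperator {X : Type*} (I : X → X → Set X) (μ : X → X → X → X) : Prop :=
  (∀ a b c : X, μ a b c ∈ I a b ∩ I b c ∩ I c a) ∧
  (∀ a b c : X, μ a b c = μ a c b) ∧
  (∀ a b c : X, μ a b c = μ b a c)

/-! Replacing `a` by a nearby point `a'` moves the intervals `[a,b]` and `[c,a]` only inside a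
neighbourhood of themselves, by (I2), because the endpoint `a` lies in both. Hence a median of
`a', b, c` lies close to all three sides of the triangle `a, b, c`, as does every median of
`a, b, c`, and the diameter bound (I3) applies. -/

/-- The medians of `a, b, c`: the points common to the three intervals `[a,b]`, `[b,c]`, `[c,a]`.
An induced operator selects one of them for each triple. -/
def medianSet {X : Type*} (I : X → X → Set X) (a b c : X) : Set X :=
  I a b ∩ I b c ∩ I c a

/-- The `R`-coarse medians of `a, b, c`: the points within `R` of each of the three intervals
`[a,b]`, `[b,c]`, `[c,a]`. Axiom (I3) bounds the diameter of this set by `ψ R`. -/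
def coarseMedianSet {X : Type*} [MetricSpace X] (I : X → X → Set X) (R : ℝ) (a b c : X) : Set X :=
  cmNbhd R (I a b) ∩ cmNbhd R (I b c) ∩ cmNbhd R (I c a)

section

variable {X : Type*} [MetricSpace X] {I : X → X → Set X} {R : ℝ}

theorem subset_cmNbhd (hR : 0 ≤ R) (A : Set X) : A ⊆ cmNbhd R A :=
  fun x hx ↦ ⟨x, hx, (dist_self x).trans_le hR⟩

theorem medianSet_subset_coarseMedianSet (hR : 0 ≤ R) (a b c : X) :
    medianSet I a b c ⊆ coarseMedianSet I R a b c :=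
  Set.inter_subset_inter
    (Set.inter_subset_inter (subset_cmNbhd hR _) (subset_cmNbhd hR _)) (subset_cmNbhd hR _)

end

namespace IsCoarseIntervalSpace

variable {X : Type*} [MetricSpace X] {I : X → X → Set X} {φ ψ : ℝ → ℝ} {R : ℝ}

theorem left_mem (hI : IsCoarseIntervalSpace I φ ψ) (a b : X) : a ∈ I a b := by
  obtain ⟨z, ⟨hz_aa, hz_ab⟩, -⟩ := hI.I3ne a a b
  obtain rfl : z = a := by simpa only [hI.I1a, Set.mem_singleton_iff] using hz_aa
  exact hz_ab

theorem right_mem (hI : IsCoarseIntervalSpace I φ ψ) (a b : X) : b ∈ I a b :=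
  hI.I1b b a ▸ hI.left_mem b a

theorem φ_nonneg [Nonempty X] (hI : IsCoarseIntervalSpace I φ ψ) (hR : 0 ≤ R) : 0 ≤ φ R := by
  obtain ⟨a⟩ := ‹Nonempty X›
  have ha : a ∈ I a a := hI.left_mem a a
  obtain ⟨z, -, hz⟩ := hI.I2 R a a a (subset_cmNbhd hR _ ha) ha
  exact dist_nonneg.trans hz

theorem subset_cmNbhd_of_dist_right_le (hI : IsCoarseIntervalSpace I φ ψ) {b b' : X}
    (h : dist b b' ≤ R) (a : X) : I a b' ⊆ cmNbhd (φ R) (I a b) :=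
  hI.I2 R a b b' ⟨b, hI.right_mem a b, (dist_comm b' b).trans_le h⟩

theorem subset_cmNbhd_of_dist_left_le (hI : IsCoarseIntervalSpace I φ ψ) {a a' : X}
    (h : dist a a' ≤ R) (b : X) : I a' b ⊆ cmNbhd (φ R) (I a b) := by
  rw [hI.I1b a' b, hI.I1b a b]
  exact hI.subset_cmNbhd_of_dist_right_le h b

theorem medianSet_subset_coarseMedianSet_of_dist_le (hI : IsCoarseIntervalSpace I φ ψ) {a a' : X}
    (h : dist a a' ≤ R) (b c : X) : medianSet I a' b c ⊆ coarseMedianSet I (φ R) a b c :=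
  have : Nonempty X := ⟨a⟩
  Set.inter_subset_inter
    (Set.inter_subset_inter (hI.subset_cmNbhd_of_dist_left_le h b)
      (subset_cmNbhd (hI.φ_nonneg (dist_nonneg.trans h)) _))
    (hI.subset_cmNbhd_of_dist_right_le h c)

end IsCoarseIntervalSpace

theorem stmt1_general {X : Type*} [MetricSpace X] {I : X → X → Set X} {φ ψ : ℝ → ℝ}
    (hI : IsCoarseIntervalSpace I φ ψ) {a a' b c m m' : X}
    (hm : m ∈ medianSet I a b c) (hm' : m' ∈ medianSet I a' b c) :
    dist m m' ≤ ψ (φ (dist a a')) := by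
  have : Nonempty X := ⟨a⟩
  have hm_coarse : m ∈ coarseMedianSet I (φ (dist a a')) a b c :=
    medianSet_subset_coarseMedianSet (hI.φ_nonneg dist_nonneg) a b c hm
  have hm'_coarse : m' ∈ coarseMedianSet I (φ (dist a a')) a b c :=
    hI.medianSet_subset_coarseMedianSet_of_dist_le le_rfl b c hm'
  exact hI.I3diam _ a b c m m' hm_coarse hm'_coarse

/-- for a coarse interval space with parameters `(φ, ψ)` and an
induced operator `μ`, we have `d(μ(a,b,c), μ(a',b,c)) ≤ ψ(φ(d(a,a')))`; in
particular axiom (C1) holds for `μ` with control function `ρ = ψ ∘ φ`. -/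
theorem stmt1 {X : Type*} [MetricSpace X] (I : X → X → Set X) (φ ψ : ℝ → ℝ)
    (μ : X → X → X → X) (hI : IsCoarseIntervalSpace I φ ψ)
    (hμ : IsInducedOperator I μ) :
    ∀ a a' b c : X, dist (μ a b c) (μ a' b c) ≤ ψ (φ (dist a a')) := by
  intro a a' b c
  exact stmt1_general hI (hμ.1 a b c) (hμ.1 a' b c)
end

section
/- Let (X,d) be a geodesic metric space, and for p,a,b ∈ X write (a|b)_p = (d(a,p) + d(b,p) − d(a,b))/2 for the Gromov product. Then the following are equivalent: (i) there is a constant δ > 0 such that min{(a|b)_p, (b|c)_p} ≤ (a|c)_p + δ for all a,b,c,p ∈ X; (ii) there is a non-decreasing function φ : ℝ≥0 → ℝ≥0 such that min{(a|b)_p, (b|c)_p} ≤ φ((a|c)_p) for all a,b,c,p ∈ X. -/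
/-- The Gromov product `(a|b)_p = (d(a,p) + d(b,p) − d(a,b))/2`. -/
noncomputable def gromovProd {X : Type*} [MetricSpace X] (p a b : X) : ℝ :=
  (dist a p + dist b p - dist a b) / 2

/-- A metric space is geodesic if any two points are joined by an isometrically
parametrised path. -/
def IsGeodesicSpace (X : Type*) [MetricSpace X] : Prop :=
  ∀ x y : X, ∃ γ : ℝ → X, γ 0 = x ∧ γ (dist x y) = y ∧
    ∀ s ∈ Set.Icc (0 : ℝ) (dist x y), ∀ t ∈ Set.Icc (0 : ℝ) (dist x y),
      dist (γ s) (γ t) = |s - t|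

/-!
Let `q` be the internal point on a geodesic `[a, c]` of the triangle `a`, `c`, `p`, i.e. the point
at distance `(c|p)_a` from `a`. Then `(a|c)_q = 0`, so a bound `K` for the minima in (ii) at
vanishing product applies at `q`. Applied to `a, p, c` it gives `d(p, q) ≤ (a|c)_p + 2K`; applied to
`a, b, c` it bounds `min ((a|b)_q, (b|c)_q)` by `K`, and moving the base point from `q` back to `p`
costs at most `d(p, q)`. An additive error in the position of `q` changes only the constants.
-/

/-- Metric convexity in the sense of Menger, up to an additive error `C`: between `x` and `y` there
are points dividing `dist x y` in any prescribed way. It holds with `C = 0` in geodesic spaces, with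
any `C > 0` in length spaces, and with `C = 1` on the vertex set of a connected graph. -/
def HasRoughInterpolation (X : Type*) [MetricSpace X] (C : ℝ) : Prop :=
  ∀ x y : X, ∀ t ∈ Set.Icc 0 (dist x y), ∃ q, dist x q ≤ t + C ∧ dist y q ≤ dist x y - t + C

/-- `q` is, up to an additive error `C`, the internal point on the side `[a, c]` of the triangle
`a`, `c`, `p`: the point where the inscribed circle of a comparison triangle touches that side. -/
def IsRoughInternalPoint {X : Type*} [MetricSpace X] (C : ℝ) (p a c q : X) : Prop :=
  dist a q ≤ gromovProd a c p + C ∧ dist c q ≤ gromovProd c a p + C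

section

variable {X : Type*} [MetricSpace X]

theorem gromovProd_comm (p a b : X) : gromovProd p a b = gromovProd p b a := by
  simp only [gromovProd, dist_comm a b, add_comm (dist a p)]

theorem gromovProd_nonneg (p a b : X) : 0 ≤ gromovProd p a b := by
  have := dist_triangle_right a b p
  unfold gromovProd
  linarith

theorem gromovProd_add_gromovProd (p a b : X) :
    gromovProd a b p + gromovProd b a p = dist a b := by
  simp only [gromovProd, dist_comm p, dist_comm b a]
  ring

theorem gromovProd_le_gromovProd_add_dist (p q a b : X) :
    gromovProd p a b ≤ gromovProd q a b + dist p q := by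
  have ha : dist a p ≤ dist a q + dist p q := dist_triangle_right a p q
  have hb : dist b p ≤ dist b q + dist p q := dist_triangle_right b p q
  unfold gromovProd
  linarith

theorem IsGeodesicSpace.hasRoughInterpolation (hX : IsGeodesicSpace X) :
    HasRoughInterpolation X 0 := by
  intro x y t ht
  obtain ⟨γ, hγx, hγy, hγ⟩ := hX x y
  have hx : dist x (γ t) = t := by
    simpa [hγx, abs_of_nonneg ht.1] using hγ 0 ⟨le_rfl, dist_nonneg⟩ t ht
  have hy : dist y (γ t) = dist x y - t := by
    simpa [hγy, abs_of_nonneg (sub_nonneg.2 ht.2)] using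
      hγ (dist x y) ⟨dist_nonneg, le_rfl⟩ t ht
  exact ⟨γ t, by rw [hx, add_zero], by rw [hy, add_zero]⟩

variable {C K : ℝ}

theorem HasRoughInterpolation.exists_isRoughInternalPoint (hX : HasRoughInterpolation X C)
    (p a c : X) : ∃ q, IsRoughInternalPoint C p a c q := by
  have hsum := gromovProd_add_gromovProd p a c
  obtain ⟨q, haq, hcq⟩ := hX a c (gromovProd a c p)
    ⟨gromovProd_nonneg a c p, by linarith [gromovProd_nonneg c a p]⟩
  exact ⟨q, haq, by linarith⟩

namespace IsRoughInternalPoint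

variable {p a c q : X}

theorem symm (h : IsRoughInternalPoint C p a c q) : IsRoughInternalPoint C p c a q :=
  And.symm h

theorem gromovProd_le (h : IsRoughInternalPoint C p a c q) : gromovProd q a c ≤ C := by
  obtain ⟨haq, hcq⟩ := h
  have hsum := gromovProd_add_gromovProd p a c
  rw [gromovProd]
  linarith

theorem dist_le_gromovProd_add_two_mul (h : IsRoughInternalPoint C p a c q) :
    dist p q ≤ gromovProd p a c + 2 * gromovProd q a p + C := by
  have hcq : dist c q ≤ gromovProd c a p + C := h.2
  have haq : gromovProd a c p - C ≤ dist a q := by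
    linarith [dist_triangle_right a c q, gromovProd_add_gromovProd p a c]
  have hap : gromovProd a c p + gromovProd p a c = dist a p := by
    rw [gromovProd_comm a, gromovProd_add_gromovProd]
  have hq : 2 * gromovProd q a p = dist a q + dist p q - dist a p := mul_div_cancel₀ _ two_ne_zero
  linarith

theorem dist_le_of_min_gromovProd_le (h : IsRoughInternalPoint C p a c q)
    (hK : min (gromovProd q a p) (gromovProd q p c) ≤ K) :
    dist p q ≤ gromovProd p a c + 2 * K + C := by
  rcases min_le_iff.1 hK with ha | hc
  · linarith [h.dist_le_gromovProd_add_two_mul]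
  · linarith [h.symm.dist_le_gromovProd_add_two_mul, gromovProd_comm p a c, gromovProd_comm q p c]

end IsRoughInternalPoint

theorem HasRoughInterpolation.min_gromovProd_le (hX : HasRoughInterpolation X C)
    (hK : ∀ a b c p : X, gromovProd p a c ≤ C →
      min (gromovProd p a b) (gromovProd p b c) ≤ K) (a b c p : X) :
    min (gromovProd p a b) (gromovProd p b c) ≤ gromovProd p a c + (3 * K + C) := by
  obtain ⟨q, hq⟩ := hX.exists_isRoughInternalPoint p a c
  have hpq : dist p q ≤ gromovProd p a c + 2 * K + C :=
    hq.dist_le_of_min_gromovProd_le (hK a p c q hq.gromovProd_le)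
  calc min (gromovProd p a b) (gromovProd p b c)
      ≤ min (gromovProd q a b + dist p q) (gromovProd q b c + dist p q) :=
        min_le_min (gromovProd_le_gromovProd_add_dist p q a b)
          (gromovProd_le_gromovProd_add_dist p q b c)
    _ = min (gromovProd q a b) (gromovProd q b c) + dist p q := min_add_add_right _ _ _
    _ ≤ K + (gromovProd p a c + 2 * K + C) := add_le_add (hK a b c q hq.gromovProd_le) hpq
    _ = gromovProd p a c + (3 * K + C) := by ring

end

theorem stmt8_general {X : Type*} [MetricSpace X] {C : ℝ} (hX : HasRoughInterpolation X C) :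
    List.TFAE [
      ∃ δ : ℝ, 0 < δ ∧ ∀ a b c p : X,
        min (gromovProd p a b) (gromovProd p b c) ≤ gromovProd p a c + δ,
      ∃ φ : ℝ → ℝ, Monotone φ ∧ ∀ a b c p : X,
        min (gromovProd p a b) (gromovProd p b c) ≤ φ (gromovProd p a c),
      ∃ K : ℝ, ∀ a b c p : X, gromovProd p a c ≤ C →
        min (gromovProd p a b) (gromovProd p b c) ≤ K] := by
  tfae_have 1 → 2 := fun ⟨δ, _, hδ⟩ => ⟨(· + δ), add_left_mono, hδ⟩
  tfae_have 2 → 3 := fun ⟨φ, hmono, hφ⟩ =>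
    ⟨φ C, fun a b c p hac => (hφ a b c p).trans (hmono hac)⟩
  tfae_have 3 → 1 := by
    rintro ⟨K, hK⟩
    refine ⟨max (3 * K + C) 1, lt_max_of_lt_right one_pos, fun a b c p => ?_⟩
    exact (hX.min_gromovProd_le hK a b c p).trans (by gcongr; exact le_max_left _ _)
  tfae_finish

/-- for a geodesic metric space, Gromov's four-point condition
(with additive constant `δ`) is equivalent to its coarse relaxation via a
non-decreasing function `φ`. -/
theorem stmt8 {X : Type*} [MetricSpace X] (hgeo : IsGeodesicSpace X) :
    (∃ δ : ℝ, 0 < δ ∧ ∀ a b c p : X,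
      min (gromovProd p a b) (gromovProd p b c) ≤ gromovProd p a c + δ) ↔
    (∃ φ : ℝ → ℝ, Monotone φ ∧ ∀ a b c p : X,
      min (gromovProd p a b) (gromovProd p b c) ≤ φ (gromovProd p a c)) :=
  (stmt8_general hgeo.hasRoughInterpolation).out 0 1
end

section
/- Let (X,d,μ) be a coarse median space and n ∈ ℕ. Then the following are equivalent: (Multi-median condition) there exists a non-decreasing function ψ such that for every λ > 0 and all x₁,…,x_{n+1}, q ∈ X, ⋂_{i≠j} N_λ([x_i,x_j]) ⊆ ⋃_{i=1}^{n+1} N_{ψ(λ)}([x_i,q]); (Thin (n+1)-cubes condition) there exists a non-decreasing function φ such that for all x₁,…,x_{n+1}, p, q ∈ X, min{d(p, μ(x_i,p,q)) : i = 1,…,n+1} ≤ φ(max{d(p, μ(x_i,x_j,p)) : i ≠ j}). -/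
/-- A coarse median space: a metric space with a ternary operator satisfying
(M1), (M2), (C1) and (C2). -/
structure IsCoarseMedianSpace {X : Type*} [MetricSpace X] (μ : X → X → X → X)
    (ρ : ℝ → ℝ) (κ₄ : ℝ) : Prop where
  M1 : ∀ a b : X, μ a a b = a
  M2₁ : ∀ a b c : X, μ a b c = μ a c b
  M2₂ : ∀ a b c : X, μ a b c = μ b a c
  ρ_mono : Monotone ρ
  C1 : ∀ a a' b b' c c' : X,
    dist (μ a b c) (μ a' b' c') ≤ ρ (dist a a' + dist b b' + dist c c')
  C2 : ∀ a b c d : X, dist (μ (μ a b c) b d) (μ a b (μ c b d)) ≤ κ₄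

/-!
For `c = μ a y b`, (C2) bounds the distance from `c` to its projection `μ a c b`: projecting to an
interval is coarsely idempotent. With (C1), a point `p` lies near `[a, b]` exactly when it lies near
`μ a p b`, at the cost of a monotone change of constants. This change of constants translates
each condition into the other.
-/

section Definitions

variable {X : Type*}

/-- The control function for projections to intervals: in a coarse median space with parameters
`ρ` and `κ₄`, a point at distance at most `r` from `[a, b]` is at distance at most
`projectionBound ρ κ₄ r` from its projection `μ a p b`. -/
def projectionBound (ρ : ℝ → ℝ) (κ₄ r : ℝ) : ℝ :=
  r + κ₄ + ρ r

variable [MetricSpace X]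

/-- The multi-median condition for families of points indexed by an arbitrary type `ι`; the
condition for `x₁, …, xₙ₊₁` is the case `ι = Fin (n + 1)`. -/
def MultiMedianCondition (μ : X → X → X → X) (ι : Type*) : Prop :=
  ∃ ψ : ℝ → ℝ, Monotone ψ ∧ ∀ r : ℝ, 0 < r → ∀ (x : ι → X) (q : X),
    (⋂ (i) (j) (_ : i ≠ j), cmNbhd r (cmInterval μ (x i) (x j))) ⊆
      ⋃ i, cmNbhd (ψ r) (cmInterval μ (x i) q)

/-- The thin cubes condition for families of points indexed by an arbitrary type `ι`; thin
`(n + 1)`-cubes are the case `ι = Fin (n + 1)`. The maximum and the minimum of the usual formulation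
are replaced by an upper bound `ξ` and an existential, so that `ι` may be infinite. -/
def ThinCubesCondition (μ : X → X → X → X) (ι : Type*) : Prop :=
  ∃ φ : ℝ → ℝ, Monotone φ ∧ ∀ (x : ι → X) (p q : X) (ξ : ℝ), 0 ≤ ξ →
    (∀ i j, i ≠ j → dist p (μ (x i) (x j) p) ≤ ξ) → ∃ i, dist p (μ (x i) p q) ≤ φ ξ

end Definitions

theorem monotone_projectionBound {ρ : ℝ → ℝ} (hρ : Monotone ρ) (κ₄ : ℝ) :
    Monotone (projectionBound ρ κ₄) :=
  (monotone_id.add_const κ₄).add hρ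

section Intervals

variable {X : Type*} [MetricSpace X] {μ : X → X → X → X} {ρ : ℝ → ℝ} {κ₄ r : ℝ} {a b c p : X}

theorem mem_cmNbhd_cmInterval_of_dist_le (hp : dist p (μ a p b) ≤ r) :
    p ∈ cmNbhd r (cmInterval μ a b) :=
  ⟨μ a p b, ⟨p, rfl⟩, hp⟩

namespace IsCoarseMedianSpace

theorem median_rotate (h : IsCoarseMedianSpace μ ρ κ₄) (a b c : X) : μ a b c = μ c a b :=
  (h.M2₁ a b c).trans (h.M2₂ a c b)

theorem dist_median_le_of_mem_cmInterval (h : IsCoarseMedianSpace μ ρ κ₄)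
    (hc : c ∈ cmInterval μ a b) : dist c (μ a c b) ≤ κ₄ := by
  obtain ⟨y, rfl⟩ := hc
  have median_bab : μ b a b = b := by rw [h.M2₁, h.M1]
  calc dist (μ a y b) (μ a (μ a y b) b)
      = dist (μ (μ b a b) a y) (μ b a (μ b a y)) := by
        rw [median_bab, h.median_rotate a y b, h.median_rotate a (μ b a y) b]
    _ ≤ κ₄ := h.C2 b a b y

theorem dist_median_median_le (h : IsCoarseMedianSpace μ ρ κ₄) (hpc : dist p c ≤ r) (a b : X) :
    dist (μ a p b) (μ a c b) ≤ ρ r :=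
  (h.C1 a a p c b b).trans (h.ρ_mono (by simpa only [dist_self, zero_add, add_zero] using hpc))

theorem dist_median_le_of_mem_cmNbhd (h : IsCoarseMedianSpace μ ρ κ₄)
    (hp : p ∈ cmNbhd r (cmInterval μ a b)) : dist p (μ a p b) ≤ projectionBound ρ κ₄ r := by
  obtain ⟨c, hc, hpc⟩ := hp
  calc dist p (μ a p b)
      ≤ dist p c + dist c (μ a c b) + dist (μ a c b) (μ a p b) := dist_triangle4 _ _ _ _
    _ ≤ r + κ₄ + ρ r := by
        gcongr
        · exact h.dist_median_le_of_mem_cmInterval hc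
        · exact h.dist_median_median_le (by rwa [dist_comm]) a b

theorem projectionBound_nonneg [Nonempty X] (h : IsCoarseMedianSpace μ ρ κ₄) (hr : 0 ≤ r) :
    0 ≤ projectionBound ρ κ₄ r := by
  obtain ⟨p⟩ := ‹Nonempty X›
  have hp : p ∈ cmNbhd r (cmInterval μ p p) :=
    mem_cmNbhd_cmInterval_of_dist_le (by rwa [h.M1, dist_self])
  exact dist_nonneg.trans (h.dist_median_le_of_mem_cmNbhd hp)

end IsCoarseMedianSpace

end Intervals

section Equivalence

variable {X ι : Type*} [MetricSpace X] {μ : X → X → X → X} {ρ : ℝ → ℝ} {κ₄ : ℝ}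

theorem MultiMedianCondition.thinCubesCondition (hμ : MultiMedianCondition μ ι)
    (h : IsCoarseMedianSpace μ ρ κ₄) : ThinCubesCondition μ ι := by
  obtain ⟨ψ, hψ, hsub⟩ := hμ
  -- The shift by `1` is there because `ξ` may vanish while the radius `r` has to be positive.
  refine ⟨fun ξ ↦ projectionBound ρ κ₄ (ψ (ξ + 1)),
    (monotone_projectionBound h.ρ_mono κ₄).comp (hψ.comp (monotone_id.add_const 1)), ?_⟩
  intro x p q ξ hξ hx
  have hp : p ∈ ⋂ (i) (j) (_ : i ≠ j), cmNbhd (ξ + 1) (cmInterval μ (x i) (x j)) := by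
    simp only [Set.mem_iInter]
    intro i j hij
    apply mem_cmNbhd_cmInterval_of_dist_le
    rw [h.M2₁]
    linarith [hx i j hij]
  obtain ⟨i, hi⟩ := Set.mem_iUnion.1 (hsub (ξ + 1) (by positivity) x q hp)
  exact ⟨i, h.dist_median_le_of_mem_cmNbhd hi⟩

theorem ThinCubesCondition.multiMedianCondition (hμ : ThinCubesCondition μ ι)
    (h : IsCoarseMedianSpace μ ρ κ₄) : MultiMedianCondition μ ι := by
  obtain ⟨φ, hφ, hthin⟩ := hμ
  refine ⟨fun r ↦ φ (projectionBound ρ κ₄ r),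
    hφ.comp (monotone_projectionBound h.ρ_mono κ₄), ?_⟩
  intro r hr x q p hp
  simp only [Set.mem_iInter] at hp
  have : Nonempty X := ⟨p⟩
  have hx (i j : ι) (hij : i ≠ j) : dist p (μ (x i) (x j) p) ≤ projectionBound ρ κ₄ r := by
    rw [h.M2₁]
    exact h.dist_median_le_of_mem_cmNbhd (hp i j hij)
  obtain ⟨i, hi⟩ := hthin x p q _ (h.projectionBound_nonneg hr.le) hx
  exact Set.mem_iUnion.2 ⟨i, mem_cmNbhd_cmInterval_of_dist_le hi⟩

theorem stmt9_general (h : IsCoarseMedianSpace μ ρ κ₄) :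
    MultiMedianCondition μ ι ↔ ThinCubesCondition μ ι :=
  ⟨fun hμ ↦ hμ.thinCubesCondition h, fun hμ ↦ hμ.multiMedianCondition h⟩

end Equivalence

/-- for a coarse median space and `n ∈ ℕ`, the multi-median
condition is equivalent to the thin `(n+1)`-cubes condition. -/
theorem stmt9 {X : Type*} [MetricSpace X] (μ : X → X → X → X)
    (ρ : ℝ → ℝ) (κ₄ : ℝ) (h : IsCoarseMedianSpace μ ρ κ₄) (n : ℕ) :
    -- Multi-median condition:
    (∃ ψ : ℝ → ℝ, Monotone ψ ∧ ∀ lam : ℝ, 0 < lam →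
      ∀ (x : Fin (n + 1) → X) (q : X),
        (⋂ (i) (j) (_ : i ≠ j), cmNbhd lam (cmInterval μ (x i) (x j))) ⊆
          ⋃ i, cmNbhd (ψ lam) (cmInterval μ (x i) q)) ↔
    -- Thin (n+1)-cubes condition:
    (∃ φ : ℝ → ℝ, Monotone φ ∧ ∀ (x : Fin (n + 1) → X) (p q : X) (ξ : ℝ),
      0 ≤ ξ → (∀ i j, i ≠ j → dist p (μ (x i) (x j) p) ≤ ξ) →
      ∃ i, dist p (μ (x i) p q) ≤ φ ξ) :=
  stmt9_general (ι := Fin (n + 1)) h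
end

section
/- Let (X,d,μ) be a uniformly discrete, quasi-geodesic coarse median space with bounded geometry and let n ∈ ℕ. Suppose there is a function p : ℝ⁺ → ℝ⁺ with p(r)/r^{n+1} → 0 as r → ∞ such that card [a,b] ≤ p(d(a,b)) for all a,b ∈ X. Then for every L > 0 there exists a constant C > 0 such that for every L-quasi-morphism σ from the median (n+1)-cube I^{n+1} to X, at least one of the vertices ē_i adjacent to the origin 0̄ satisfies d(σ(ē_i), σ(0̄)) ≤ C. (That is, X has rank at most n in the sense of the coarse-cube characterisation of rank.) -/
/-- Majority vote on three booleans. -/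
def boolMaj (u v w : Bool) : Bool := (u && v) || (v && w) || (u && w)

/-- The median of the median `n`-cube `{0,1}ⁿ`: coordinatewise majority
vote. -/
def cubeMedian {n : ℕ} (u v w : Fin n → Bool) : Fin n → Bool :=
  fun i => boolMaj (u i) (v i) (w i)

/-!
Families of points of a coarse median space modulo bounded distance form a genuine median algebra,
whose intervals `[z, t]` are distributive lattices with least element `z`. In such a lattice
pairwise disjoint elements `e k` give coordinates: any choice of `y k ≤ e k` is recovered from the
join `w` of the `y k` as `w ⊓ e k = y k`. Taking families indexed by all possible configurations
turns this into a uniform coarse statement about quasi-morphic cubes, in which the `e k` are the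
edges at the origin.

If all these edges are longer than a multiple of `m`, then choosing points `x k` at distance about
`m` along them and joining the `x k` gives a point `b` at distance `O(m)` from the origin.
Independent choices among `m + 1` well separated points on each `[base, x k]` yield `(m + 1) ^ (n
+ 1)` distinct points of `[base, b]`, more than `p` allows once `m` is large.
-/

theorem le_sup_inf_of_sup_inf_median_law {α : Type*} [Lattice α]
    (h : ∀ a b c : α, (a ⊔ b) ⊓ (a ⊔ c) ⊓ (b ⊔ c) ≤ a ⊓ b ⊔ a ⊓ c ⊔ b ⊓ c) (a b c : α) :
    (a ⊔ b) ⊓ (a ⊔ c) ≤ a ⊔ b ⊓ c := by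
  have sup_inf_le : ∀ d e, (a ⊔ e) ⊓ d ≤ a ⊔ e ⊓ d := fun d e => calc
    (a ⊔ e) ⊓ d ≤ (a ⊔ e) ⊓ (a ⊔ d) ⊓ (e ⊔ d) :=
      le_inf (inf_le_inf_left _ le_sup_right) (inf_le_right.trans le_sup_right)
    _ ≤ a ⊓ e ⊔ a ⊓ d ⊔ e ⊓ d := h a e d
    _ ≤ a ⊔ e ⊓ d := sup_le_sup_right (sup_le inf_le_left inf_le_left) _
  calc (a ⊔ b) ⊓ (a ⊔ c) ≤ a ⊔ b ⊓ (a ⊔ c) := sup_inf_le _ _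
    _ ≤ a ⊔ (a ⊔ b ⊓ c) := by
      simpa only [inf_comm b] using sup_le_sup_left (sup_inf_le b c) a
    _ = a ⊔ b ⊓ c := sup_left_idem _ _

theorem finset_sup_inf_eq_of_pairwiseDisjoint {α ι : Type*} [DistribLattice α] [OrderBot α]
    {s : Finset ι} {e y : ι → α} (he : (s : Set ι).PairwiseDisjoint e) (hy : ∀ k ∈ s, y k ≤ e k)
    {k : ι} (hk : k ∈ s) : s.sup y ⊓ e k = y k := by
  rw [Finset.sup_inf_distrib_right]
  refine le_antisymm (Finset.sup_le fun j hj => ?_) ?_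
  · obtain rfl | hjk := eq_or_ne j k
    · exact inf_le_left
    · exact (inf_le_inf_right _ (hy j hj)).trans ((he hj hk hjk).le_bot.trans bot_le)
  · exact (le_inf le_rfl (hy k hk)).trans (Finset.le_sup (f := fun j => y j ⊓ e k) hk)

/-- A median algebra, axiomatised by the four-point condition `med_assoc`: for each `b`, the
operation `(a, c) ↦ med a b c` is associative. -/
class MedianAlgebra (Q : Type*) where
  med : Q → Q → Q → Q
  med_self_left : ∀ a b, med a a b = a
  med_right_comm : ∀ a b c, med a b c = med a c b
  med_left_comm : ∀ a b c, med a b c = med b a c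
  med_assoc : ∀ a b c d, med (med a b c) b d = med a b (med c b d)

namespace MedianAlgebra

variable {Q : Type*} [MedianAlgebra Q] {a b c p q z t : Q}

theorem med_reverse (a b c : Q) : med a b c = med c b a := by
  rw [med_right_comm, med_left_comm, med_right_comm]

theorem med_self_right (a b : Q) : med a b b = b := by
  rw [med_reverse, med_self_left]

theorem med_self_outer (a b : Q) : med a b a = a := by
  rw [med_right_comm, med_self_left]

theorem mem_cmInterval : c ∈ cmInterval med a b ↔ med a c b = c := by
  refine ⟨?_, fun h => ⟨c, h.symm⟩⟩
  rintro ⟨x, rfl⟩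
  have rotate : med a x b = med x b a := by rw [med_left_comm, med_right_comm]
  rw [rotate, med_left_comm, med_right_comm, med_assoc, med_self_outer]

theorem left_mem_cmInterval (a b : Q) : a ∈ cmInterval med a b :=
  mem_cmInterval.2 (med_self_left a b)

theorem cmInterval_comm (a b : Q) : cmInterval med a b = cmInterval med b a := by
  ext c
  rw [mem_cmInterval, mem_cmInterval, med_reverse]

theorem med_mem_cmInterval (a b c : Q) : med a b c ∈ cmInterval med a c :=
  ⟨b, rfl⟩

theorem mem_cmInterval_trans (hp : p ∈ cmInterval med a q) (hq : q ∈ cmInterval med a b) :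
    p ∈ cmInterval med a b := by
  rw [mem_cmInterval] at *
  have h := med_assoc p a q b
  grind [med_left_comm, med_right_comm]

theorem mem_cmInterval_of_nested (hp : p ∈ cmInterval med a q) (hq : q ∈ cmInterval med a b) :
    q ∈ cmInterval med p b := by
  rw [mem_cmInterval] at *
  have h := med_assoc p q a b
  grind [med_left_comm, med_right_comm, med_self_left]

theorem med_mem_cmInterval_of_mem (hp : p ∈ cmInterval med a b) (w : Q) :
    med a p w ∈ cmInterval med a b := by
  rw [mem_cmInterval] at *
  have h := med_assoc b a p w
  grind [med_left_comm, med_right_comm]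

theorem mem_cmInterval_med (hb : p ∈ cmInterval med a b) (hc : p ∈ cmInterval med a c) :
    p ∈ cmInterval med a (med a b c) := by
  rw [mem_cmInterval] at *
  have h := med_assoc p a b c
  grind [med_left_comm, med_right_comm]

theorem cmInterval_subset (hp : p ∈ cmInterval med a b) (hq : q ∈ cmInterval med a b) :
    cmInterval med p q ⊆ cmInterval med a b := by
  intro w hw
  -- `med a w b` lies in both `[med a p w, w]` and `[med a q w, w]`, whereas `w` lies in
  -- `[med a p w, med a q w]`; hence `w = med a w b`.
  have gate : ∀ {r}, r ∈ cmInterval med a b → med (med a r w) w (med a w b) = med a w b := by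
    intro r hr
    have hrv : med a r w ∈ cmInterval med a (med a w b) :=
      mem_cmInterval_med (med_mem_cmInterval a r w) (med_mem_cmInterval_of_mem hr w)
    have hvw : med a w b ∈ cmInterval med a w :=
      med_right_comm a w b ▸ med_mem_cmInterval a b w
    rw [med_right_comm]
    exact mem_cmInterval.1 (mem_cmInterval_of_nested hrv hvw)
  have hw_between : med (med a p w) w (med a q w) = w := by
    have h₁ : med (med a p w) w q = w := by
      grind [med_assoc a w p q, mem_cmInterval, med_right_comm, med_self_right]
    have h₂ := med_assoc a w q (med a p w)
    grind [med_left_comm, med_right_comm, med_self_left]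
  have h := med_assoc (med a p w) w (med a q w) (med a w b)
  rw [hw_between, med_self_left, gate hq, gate hp] at h
  exact mem_cmInterval.2 h.symm

theorem eq_med_of_mem (hab : p ∈ cmInterval med a b) (hac : p ∈ cmInterval med a c)
    (hbc : p ∈ cmInterval med b c) : p = med a b c := by
  have hpa : p ∈ cmInterval med a (med a b c) := mem_cmInterval_med hab hac
  have hpb : p ∈ cmInterval med b (med a b c) := by
    rw [med_left_comm]
    exact mem_cmInterval_med (cmInterval_comm a b ▸ hab) hbc
  have hmb : med a b c ∈ cmInterval med p b :=
    mem_cmInterval_of_nested hpa (med_right_comm a b c ▸ med_mem_cmInterval a c b)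
  rw [mem_cmInterval] at hpb hmb
  rw [← hpb, ← hmb]
  grind [med_left_comm, med_right_comm]

section Lattice

instance : Max (cmInterval med z t) where
  max a b := ⟨med (a : Q) t b, cmInterval_subset a.2 b.2 (med_mem_cmInterval _ _ _)⟩

instance : Min (cmInterval med z t) where
  min a b := ⟨med (a : Q) z b, cmInterval_subset a.2 b.2 (med_mem_cmInterval _ _ _)⟩

theorem coe_sup (a b : cmInterval med z t) : ((a ⊔ b : cmInterval med z t) : Q) =
    med (a : Q) t b := rfl

theorem coe_inf (a b : cmInterval med z t) : ((a ⊓ b : cmInterval med z t) : Q) =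
    med (a : Q) z b := rfl

instance : Lattice (cmInterval med z t) :=
  Lattice.mk'
    (fun a b => Subtype.ext (by simp only [coe_sup, med_reverse (a : Q)]))
    (fun a b c => Subtype.ext (med_assoc _ _ _ _))
    (fun a b => Subtype.ext (med_reverse _ _ _))
    (fun a b c => Subtype.ext (med_assoc _ _ _ _))
    (fun a b => Subtype.ext <| by
      have ha := mem_cmInterval.1 a.2
      rw [coe_sup, coe_inf]
      grind [med_assoc t a z b, med_left_comm, med_right_comm, med_self_left])
    (fun a b => Subtype.ext <| by
      have ha := mem_cmInterval.1 a.2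
      rw [coe_inf, coe_sup]
      grind [med_assoc z a t b, med_left_comm, med_right_comm, med_self_left])

theorem le_iff_mem_cmInterval {a b : cmInterval med z t} :
    a ≤ b ↔ (a : Q) ∈ cmInterval med z b := by
  rw [← inf_eq_left, Subtype.ext_iff, coe_inf, mem_cmInterval, med_left_comm]

instance : OrderBot (cmInterval med z t) where
  bot := ⟨z, left_mem_cmInterval z t⟩
  bot_le a := le_iff_mem_cmInterval.2 (left_mem_cmInterval z a)

theorem mem_cmInterval_of_inf_le_of_le_sup {a b c : cmInterval med z t} (hinf : a ⊓ b ≤ c)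
    (hsup : c ≤ a ⊔ b) : (c : Q) ∈ cmInterval med (a : Q) b :=
  cmInterval_subset (med_mem_cmInterval _ _ _) (med_mem_cmInterval _ _ _)
    (mem_cmInterval_of_nested (le_iff_mem_cmInterval.1 hinf) (le_iff_mem_cmInterval.1 hsup))

theorem sup_inf_median_law (a b c : cmInterval med z t) :
    a ⊓ b ⊔ a ⊓ c ⊔ b ⊓ c = (a ⊔ b) ⊓ (a ⊔ c) ⊓ (b ⊔ c) := by
  have coe_eq_med : ∀ {d : cmInterval med z t}, a ⊓ b ⊔ a ⊓ c ⊔ b ⊓ c ≤ d →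
      d ≤ (a ⊔ b) ⊓ (a ⊔ c) ⊓ (b ⊔ c) → (d : Q) = med (a : Q) b c := by
    intro d hd hd'
    simp only [sup_le_iff, le_inf_iff] at hd hd'
    exact eq_med_of_mem (mem_cmInterval_of_inf_le_of_le_sup hd.1.1 hd'.1.1)
      (mem_cmInterval_of_inf_le_of_le_sup hd.1.2 hd'.1.2)
      (mem_cmInterval_of_inf_le_of_le_sup hd.2 hd'.2)
  have hle : a ⊓ b ⊔ a ⊓ c ⊔ b ⊓ c ≤ (a ⊔ b) ⊓ (a ⊔ c) ⊓ (b ⊔ c) := by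
    refine sup_le (sup_le ?_ ?_) ?_ <;> refine le_inf (le_inf ?_ ?_) ?_
    · exact inf_le_sup
    · exact inf_le_left.trans le_sup_left
    · exact inf_le_right.trans le_sup_left
    · exact inf_le_left.trans le_sup_left
    · exact inf_le_sup
    · exact inf_le_right.trans le_sup_right
    · exact inf_le_left.trans le_sup_right
    · exact inf_le_right.trans le_sup_right
    · exact inf_le_sup
  exact Subtype.ext ((coe_eq_med le_rfl hle).trans (coe_eq_med hle le_rfl).symm)

instance : DistribLattice (cmInterval med z t) where
  le_sup_inf := le_sup_inf_of_sup_inf_median_law fun a b c => (sup_inf_median_law a b c).ge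

theorem exists_forall_med_eq {ι : Type*} [Finite ι] {e y : ι → Q}
    (he : ∀ k, e k ∈ cmInterval med z t)
    (hdisj : Pairwise fun j k => med z (e j) (e k) = z)
    (hy : ∀ k, y k ∈ cmInterval med z (e k)) :
    ∃ w, ∀ b, (∀ k, y k ∈ cmInterval med z b) → ∀ k, med z (med w z b) (e k) = y k := by
  cases nonempty_fintype ι
  let e' : ι → cmInterval med z t := fun k => ⟨e k, he k⟩
  let y' : ι → cmInterval med z t := fun k => ⟨y k, mem_cmInterval_trans (hy k) (he k)⟩
  have he' : ((Finset.univ : Finset ι) : Set ι).PairwiseDisjoint e' := fun j _ k _ hjk =>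
    disjoint_iff.2 <| Subtype.ext <| (med_left_comm _ _ _).trans (hdisj hjk)
  refine ⟨(Finset.univ.sup y' : cmInterval med z t), fun b hb k => ?_⟩
  have hwk : med ((Finset.univ.sup y' : cmInterval med z t) : Q) z (e k) = y k :=
    congrArg Subtype.val <| finset_sup_inf_eq_of_pairwiseDisjoint he'
      (fun j _ => le_iff_mem_cmInterval.2 (hy j : (y' j : Q) ∈ _)) (Finset.mem_univ k)
  rw [med_reverse _ z b, med_left_comm, med_assoc, hwk, med_left_comm, med_right_comm]
  exact mem_cmInterval.1 (hb k)

theorem exists_upper_bound_of_med_closed {ι : Type*} [Finite ι] {P : Q → Prop} (hz : P z)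
    (hP : ∀ a b, P a → P b → P (med a t b)) {x : ι → Q} (hx : ∀ k, x k ∈ cmInterval med z t)
    (hPx : ∀ k, P (x k)) : ∃ b, P b ∧ ∀ k, x k ∈ cmInterval med z b := by
  cases nonempty_fintype ι
  let x' : ι → cmInterval med z t := fun k => ⟨x k, hx k⟩
  refine ⟨(Finset.univ.sup x' : cmInterval med z t), ?_, fun k =>
    le_iff_mem_cmInterval.1 (Finset.le_sup (f := x') (Finset.mem_univ k))⟩
  exact Finset.sup_induction (p := fun a : cmInterval med z t => P a) hz
    (fun a ha b hb => hP a b ha hb) fun k _ => hPx k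

end Lattice

end MedianAlgebra

section CoarseFamily

/-- The relation on families of points of being at bounded distance from each other. -/
def boundedDistSetoid (I X : Type*) [PseudoMetricSpace X] : Setoid (I → X) where
  r f g := ∃ B : ℝ, ∀ i, dist (f i) (g i) ≤ B
  iseqv :=
    { refl := fun f => ⟨0, fun i => (dist_self (f i)).le⟩
      symm := fun ⟨B, hB⟩ => ⟨B, fun i => dist_comm (_ : X) _ ▸ hB i⟩
      trans := fun ⟨B, hB⟩ ⟨B', hB'⟩ =>
        ⟨B + B', fun i => (dist_triangle _ _ _).trans (add_le_add (hB i) (hB' i))⟩ }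

namespace IsCoarseMedianSpace

variable {I X : Type*} [MetricSpace X] {μ : X → X → X → X} {ρ : ℝ → ℝ} {κ₄ : ℝ}

/-- Families of points of a coarse median space up to bounded distance. The proof argument records
`μ` in the type, so that the median induced by `μ` can be an instance. -/
def CoarseFamily (_ : IsCoarseMedianSpace μ ρ κ₄) (I : Type*) : Type _ :=
  Quotient (boundedDistSetoid I X)

/-- The class of a family of points up to bounded distance. -/
def coarseClass (h : IsCoarseMedianSpace μ ρ κ₄) (f : I → X) : h.CoarseFamily I :=
  Quotient.mk _ f

variable {h : IsCoarseMedianSpace μ ρ κ₄}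

theorem coarseClass_eq_iff {f g : I → X} :
    h.coarseClass f = h.coarseClass g ↔ ∃ B : ℝ, ∀ i, dist (f i) (g i) ≤ B :=
  Quotient.eq (r := boundedDistSetoid I X)

theorem coarseClass_surjective : Function.Surjective (h.coarseClass (I := I)) :=
  Quotient.mk_surjective

/-- The pointwise median of classes of families, computed on representatives. -/
noncomputable def coarseMed (h : IsCoarseMedianSpace μ ρ κ₄) (a b c : h.CoarseFamily I) :
    h.CoarseFamily I :=
  h.coarseClass fun i => μ (a.out i) (b.out i) (c.out i)

theorem coarseMed_coarseClass (f g k : I → X) :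
    h.coarseMed (h.coarseClass f) (h.coarseClass g) (h.coarseClass k) =
      h.coarseClass fun i => μ (f i) (g i) (k i) := by
  have exists_dist_out_le : ∀ f : I → X, ∃ B : ℝ, ∀ i, dist ((h.coarseClass f).out i) (f i) ≤ B :=
    fun f => Quotient.mk_out (s := boundedDistSetoid I X) f
  obtain ⟨B₁, hB₁⟩ := exists_dist_out_le f
  obtain ⟨B₂, hB₂⟩ := exists_dist_out_le g
  obtain ⟨B₃, hB₃⟩ := exists_dist_out_le k
  exact coarseClass_eq_iff.2 ⟨ρ (B₁ + B₂ + B₃), fun i => (h.C1 _ _ _ _ _ _).trans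
    (h.ρ_mono (add_le_add (add_le_add (hB₁ i) (hB₂ i)) (hB₃ i)))⟩

noncomputable instance : MedianAlgebra (h.CoarseFamily I) where
  med := h.coarseMed
  med_self_left := coarseClass_surjective.forall₂.2 fun f g => by
    simp only [coarseMed_coarseClass, h.M1]
  med_right_comm := coarseClass_surjective.forall₃.2 fun f g k => by
    simp only [coarseMed_coarseClass, h.M2₁ (f _) (g _)]
  med_left_comm := coarseClass_surjective.forall₃.2 fun f g k => by
    simp only [coarseMed_coarseClass, h.M2₂ (f _) (g _)]
  med_assoc := coarseClass_surjective.forall₂.2 fun f g =>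
    coarseClass_surjective.forall₂.2 fun k l => by
      simp only [coarseMed_coarseClass]
      exact coarseClass_eq_iff.2 ⟨κ₄, fun i => h.C2 _ _ _ _⟩

theorem med_coarseClass (f g k : I → X) :
    MedianAlgebra.med (h.coarseClass f) (h.coarseClass g) (h.coarseClass k) =
      h.coarseClass fun i => μ (f i) (g i) (k i) :=
  coarseMed_coarseClass f g k

theorem coarseClass_mem_cmInterval {f g k : I → X} (hk : ∀ i, k i ∈ cmInterval μ (f i) (g i)) :
    h.coarseClass k ∈ cmInterval MedianAlgebra.med (h.coarseClass f) (h.coarseClass g) := by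
  choose l hl using hk
  exact ⟨h.coarseClass l, by rw [med_coarseClass, funext hl]⟩

theorem coarseClass_mem_cmInterval_iff {f g k : I → X} :
    h.coarseClass k ∈ cmInterval MedianAlgebra.med (h.coarseClass f) (h.coarseClass g) ↔
      ∃ B : ℝ, ∀ i, dist (μ (f i) (k i) (g i)) (k i) ≤ B := by
  rw [MedianAlgebra.mem_cmInterval, med_coarseClass, coarseClass_eq_iff]

end IsCoarseMedianSpace

end CoarseFamily

section LargeScaleGeodesic

/-- A space is large-scale geodesic if any two points are joined by a chain of uniformly short
steps whose number of steps is at most linear in the distance. -/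
def IsLargeScaleGeodesic (X : Type*) [PseudoMetricSpace X] : Prop :=
  ∃ S : ℝ, 0 ≤ S ∧ ∀ x y : X, ∃ (w : ℕ → X) (J : ℕ), w 0 = x ∧ w J = y ∧
    (J : ℝ) ≤ S * (dist x y + 1) ∧ ∀ j < J, dist (w j) (w (j + 1)) ≤ S

theorem isLargeScaleGeodesic_of_coarseLipschitz_paths {X : Type*} [PseudoMetricSpace X] {L C : ℝ}
    (hL : 0 ≤ L) (hC : 0 ≤ C)
    (hpath : ∀ x y : X, ∃ γ : ℝ → X, γ 0 = x ∧ γ (dist x y) = y ∧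
      ∀ s ∈ Set.Icc 0 (dist x y), ∀ t ∈ Set.Icc 0 (dist x y),
        dist (γ s) (γ t) ≤ L * |s - t| + C) :
    IsLargeScaleGeodesic X := by
  refine ⟨L + C + 1, by positivity, fun x y => ?_⟩
  obtain ⟨γ, hγ₀, hγ₁, hγ⟩ := hpath x y
  have hd : 0 ≤ dist x y := dist_nonneg
  refine ⟨fun j => γ (min j (dist x y)), ⌈dist x y⌉₊, ?_, ?_, ?_, fun j _ => ?_⟩
  · simpa only [Nat.cast_zero, min_eq_left hd] using hγ₀
  · simpa only [min_eq_right (Nat.le_ceil (dist x y))] using hγ₁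
  · nlinarith [Nat.ceil_lt_add_one hd, mul_nonneg (add_nonneg hL hC) hd]
  · have hmem : ∀ i : ℕ, min (i : ℝ) (dist x y) ∈ Set.Icc 0 (dist x y) :=
      fun i => ⟨le_min i.cast_nonneg hd, min_le_right _ _⟩
    have hstep : |min (j : ℝ) (dist x y) - min ((j + 1 : ℕ) : ℝ) (dist x y)| ≤ 1 := by
      refine (abs_min_sub_min_le_max _ _ _ _).trans (max_le ?_ ?_) <;> simp
    have := hγ _ (hmem j) _ (hmem (j + 1))
    nlinarith

namespace IsCoarseMedianSpace

variable {X : Type*} [MetricSpace X] {μ : X → X → X → X} {ρ : ℝ → ℝ} {κ₄ : ℝ}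

theorem med_self_right (h : IsCoarseMedianSpace μ ρ κ₄) (a b : X) : μ a b b = b := by
  rw [h.M2₂, h.M2₁, h.M1]

theorem med_self_outer (h : IsCoarseMedianSpace μ ρ κ₄) (a b : X) : μ a b a = a := by
  rw [h.M2₁, h.M1]

theorem med_reverse (h : IsCoarseMedianSpace μ ρ κ₄) (a b c : X) : μ a b c = μ c b a := by
  rw [h.M2₁, h.M2₂, h.M2₁]

theorem dist_med_left_le (h : IsCoarseMedianSpace μ ρ κ₄) {a a' : X} {S : ℝ} (ha : dist a a' ≤ S)
    (b c : X) : dist (μ a b c) (μ a' b c) ≤ |ρ S| := by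
  refine (h.C1 a a' b b c c).trans ((h.ρ_mono ?_).trans (le_abs_self _))
  rwa [dist_self, dist_self, add_zero, add_zero]

theorem cmInterval_subset_closedBall (h : IsCoarseMedianSpace μ ρ κ₄) (a b : X) :
    cmInterval μ a b ⊆ Metric.closedBall a (ρ (dist a b)) := by
  rintro _ ⟨x, rfl⟩
  simpa only [h.med_self_outer, dist_self, zero_add, Metric.mem_closedBall, dist_comm b a]
    using h.C1 a a x x b a

theorem cmInterval_finite (h : IsCoarseMedianSpace μ ρ κ₄)
    (hball : ∀ r : ℝ, 0 < r → ∀ x : X, (Metric.closedBall x r).Finite) (a b : X) :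
    (cmInterval μ a b).Finite :=
  (hball (max 1 (ρ (dist a b))) (by positivity) a).subset <|
    (h.cmInterval_subset_closedBall a b).trans <| Metric.closedBall_subset_closedBall <|
      le_max_right _ _

theorem exists_coarseLipschitz (h : IsCoarseMedianSpace μ ρ κ₄) (hX : IsLargeScaleGeodesic X) :
    ∃ K : ℝ, 0 ≤ K ∧ ∀ a a' b c : X, dist (μ a b c) (μ a' b c) ≤ K * (dist a a' + 1) := by
  obtain ⟨S, hS, hchain⟩ := hX
  refine ⟨S * |ρ S|, by positivity, fun a a' b c => ?_⟩
  obtain ⟨w, J, rfl, rfl, hJ, hw⟩ := hchain a a'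
  calc dist (μ (w 0) b c) (μ (w J) b c)
      ≤ ∑ _j ∈ Finset.range J, |ρ S| :=
        dist_le_range_sum_of_dist_le (f := fun j => μ (w j) b c) J
          fun hj => h.dist_med_left_le (hw _ hj) b c
    _ = J * |ρ S| := by rw [Finset.sum_const, Finset.card_range, nsmul_eq_mul]
    _ ≤ S * (dist (w 0) (w J) + 1) * |ρ S| := by gcongr
    _ = S * |ρ S| * (dist (w 0) (w J) + 1) := by ring

theorem exists_dist_med_le (h : IsCoarseMedianSpace μ ρ κ₄) (hX : IsLargeScaleGeodesic X) :
    ∃ K : ℝ, 0 ≤ K ∧ ∀ a b c d : X, dist a (μ b c d) ≤ K * (dist a b + dist a d + 2) := by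
  obtain ⟨K, hK, hLip⟩ := h.exists_coarseLipschitz hX
  refine ⟨K, hK, fun a b c d => ?_⟩
  calc dist a (μ b c d) = dist (μ a c a) (μ b c d) := by rw [h.med_self_outer]
    _ ≤ dist (μ a c a) (μ b c a) + dist (μ a c b) (μ d c b) := by
      rw [h.med_reverse a c b, h.med_reverse d c b]
      exact dist_triangle _ _ _
    _ ≤ K * (dist a b + 1) + K * (dist a d + 1) := add_le_add (hLip _ _ _ _) (hLip _ _ _ _)
    _ = K * (dist a b + dist a d + 2) := by ring

theorem exists_dist_le_add_dist_med (h : IsCoarseMedianSpace μ ρ κ₄)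
    (hX : IsLargeScaleGeodesic X) :
    ∃ K : ℝ, 0 ≤ K ∧ ∀ a b x : X, dist a x ≤ K * (dist a b + 1) + dist (μ a x b) x := by
  obtain ⟨K, hK, hLip⟩ := h.exists_coarseLipschitz hX
  refine ⟨K, hK, fun a b x => (dist_triangle a (μ a x b) x).trans (add_le_add_left ?_ _)⟩
  simpa only [h.med_reverse a, h.med_self_outer] using hLip a b x a

theorem exists_mem_cmInterval_dist_mem_Icc (h : IsCoarseMedianSpace μ ρ κ₄)
    (hX : IsLargeScaleGeodesic X) :
    ∃ K : ℝ, 0 ≤ K ∧ ∀ (a b : X) (M : ℝ), 0 ≤ M → M ≤ dist a b →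
      ∃ x ∈ cmInterval μ a b, dist a x ∈ Set.Icc M (M + K) := by
  obtain ⟨S, -, hchain⟩ := hX
  refine ⟨|ρ S|, abs_nonneg _, fun a b M hM₀ hM => ?_⟩
  obtain ⟨w, J, hw₀, hwJ, -, hw⟩ := hchain a b
  have hJ : M ≤ dist a (μ a (w J) b) := by rwa [hwJ, h.med_self_right]
  classical
  have hexists : ∃ j, M ≤ dist a (μ a (w j) b) := ⟨J, hJ⟩
  refine ⟨μ a (w (Nat.find hexists)) b, ⟨_, rfl⟩, Nat.find_spec hexists, ?_⟩
  rcases hfind : Nat.find hexists with _ | j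
  · rw [hw₀, h.M1, dist_self]
    positivity
  · have hjJ : j < J := Nat.lt_of_succ_le (hfind.symm.trans_le (Nat.find_min' hexists hJ))
    have hlt : dist a (μ a (w j) b) < M :=
      not_le.1 (Nat.find_min hexists (hfind ▸ j.lt_succ_self))
    have hstep : dist (μ a (w j) b) (μ a (w (j + 1)) b) ≤ |ρ S| := by
      rw [h.M2₂ a, h.M2₂ a]
      exact h.dist_med_left_le (hw j hjJ) a b
    exact (dist_triangle _ _ _).trans (add_le_add hlt.le hstep)

end IsCoarseMedianSpace

end LargeScaleGeodesic

section Corner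

/-- The images under an `L`-quasi-morphism of the edges of a cube at the origin, reduced to what the
rank bound needs: the edges `[base, vertex k]` lie coarsely in `[base, top]` and meet pairwise
coarsely in `base` alone. -/
structure CoarseCorner {X : Type*} [MetricSpace X] (μ : X → X → X → X) (L : ℝ) (ι : Type*) where
  base : X
  top : X
  vertex : ι → X
  dist_med_top_le : ∀ k, dist (μ base (vertex k) top) (vertex k) ≤ L
  dist_med_vertex_le : ∀ j k, j ≠ k → dist (μ base (vertex j) (vertex k)) base ≤ L

/-- A map from the median `n`-cube which preserves medians up to `L`. -/
def IsCubeQuasiMorphism {X : Type*} [MetricSpace X] {n : ℕ} (μ : X → X → X → X) (L : ℝ)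
    (σ : (Fin n → Bool) → X) : Prop :=
  ∀ u v w, dist (μ (σ u) (σ v) (σ w)) (σ (cubeMedian u v w)) ≤ L

/-- The corner of a quasi-morphism at the origin of the cube. -/
def IsCubeQuasiMorphism.corner {X : Type*} [MetricSpace X] {n : ℕ} {μ : X → X → X → X} {L : ℝ}
    {σ : (Fin n → Bool) → X} (hσ : IsCubeQuasiMorphism μ L σ) : CoarseCorner μ L (Fin n) where
  base := σ fun _ => false
  top := σ fun _ => true
  vertex k := σ fun j => if j = k then true else false
  dist_med_top_le k := by
    convert hσ _ _ _ using 3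
    funext i
    simp [cubeMedian, boolMaj]
  dist_med_vertex_le j k hjk := by
    convert hσ _ _ _ using 3
    funext i
    grind [cubeMedian, boolMaj]

namespace IsCoarseMedianSpace

open MedianAlgebra

variable {I X ι : Type*} [MetricSpace X] {μ : X → X → X → X} {ρ : ℝ → ℝ} {κ₄ : ℝ}
  {h : IsCoarseMedianSpace μ ρ κ₄}

theorem coarseClass_vertex_mem {L : ℝ} (c : I → CoarseCorner μ L ι) (k : ι) :
    h.coarseClass (fun i => (c i).vertex k) ∈
      cmInterval med (h.coarseClass fun i => (c i).base) (h.coarseClass fun i => (c i).top) :=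
  coarseClass_mem_cmInterval_iff.2 ⟨L, fun i => (c i).dist_med_top_le k⟩

theorem med_coarseClass_vertex {L : ℝ} (c : I → CoarseCorner μ L ι) :
    Pairwise fun j k => med (h.coarseClass fun i => (c i).base)
      (h.coarseClass fun i => (c i).vertex j) (h.coarseClass fun i => (c i).vertex k) =
        h.coarseClass fun i => (c i).base := fun j k hjk =>
  (med_coarseClass _ _ _).trans <|
    coarseClass_eq_iff.2 ⟨L, fun i => (c i).dist_med_vertex_le j k hjk⟩

variable [Finite ι]

theorem exists_mem_cmInterval_with_coordinates (h : IsCoarseMedianSpace μ ρ κ₄) (L B : ℝ) :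
    ∃ B' : ℝ, ∀ (c : CoarseCorner μ L ι) (x y : ι → X) (b : X),
      (∀ k, x k ∈ cmInterval μ c.base (c.vertex k)) → (∀ k, y k ∈ cmInterval μ c.base (x k)) →
      (∀ k, dist (μ c.base (x k) b) (x k) ≤ B) →
      ∃ g ∈ cmInterval μ c.base b, ∀ k, dist (μ c.base g (c.vertex k)) (y k) ≤ B' := by
  let I := {i : CoarseCorner μ L ι × (ι → X) × (ι → X) × X //
    (∀ k, i.2.1 k ∈ cmInterval μ i.1.base (i.1.vertex k)) ∧
    (∀ k, i.2.2.1 k ∈ cmInterval μ i.1.base (i.2.1 k)) ∧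
    ∀ k, dist (μ i.1.base (i.2.1 k) i.2.2.2) (i.2.1 k) ≤ B}
  let z := h.coarseClass fun i : I => i.1.1.base
  let e k := h.coarseClass fun i : I => i.1.1.vertex k
  let x k := h.coarseClass fun i : I => i.1.2.1 k
  let y k := h.coarseClass fun i : I => i.1.2.2.1 k
  let b := h.coarseClass fun i : I => i.1.2.2.2
  have hx : ∀ k, x k ∈ cmInterval med z (e k) := fun k =>
    coarseClass_mem_cmInterval fun i => i.2.1 k
  have hy : ∀ k, y k ∈ cmInterval med z (x k) := fun k =>
    coarseClass_mem_cmInterval fun i => i.2.2.1 k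
  have hxb : ∀ k, x k ∈ cmInterval med z b := fun k =>
    coarseClass_mem_cmInterval_iff.2 ⟨B, fun i => i.2.2.2 k⟩
  obtain ⟨q, hq⟩ := exists_forall_med_eq (coarseClass_vertex_mem fun i : I => i.1.1)
    (med_coarseClass_vertex fun i : I => i.1.1) fun k => mem_cmInterval_trans (hy k) (hx k)
  obtain ⟨w, rfl⟩ := coarseClass_surjective q
  have hw : ∀ k, ∃ B' : ℝ, ∀ i : I,
      dist (μ i.1.1.base (μ (w i) i.1.1.base i.1.2.2.2) (i.1.1.vertex k)) (i.1.2.2.1 k) ≤ B' := by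
    intro k
    have := hq b (fun k => mem_cmInterval_trans (hy k) (hxb k)) k
    rwa [med_coarseClass, med_coarseClass, coarseClass_eq_iff] at this
  choose B' hB' using hw
  obtain ⟨M, hM⟩ := Finite.exists_le B'
  refine ⟨M, fun c x y b hx hy hxb => ?_⟩
  let i : I := ⟨(c, x, y, b), hx, hy, hxb⟩
  exact ⟨μ (w i) c.base b, ⟨w i, h.M2₂ _ _ _⟩, fun k => (hB' k i).trans (hM k)⟩

theorem exists_coarse_upper_bound (h : IsCoarseMedianSpace μ ρ κ₄) (hX : IsLargeScaleGeodesic X)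
    (L : ℝ) :
    ∃ A B : ℝ, ∀ (c : CoarseCorner μ L ι) (x : ι → X) (r : ℝ), 1 ≤ r →
      (∀ k, x k ∈ cmInterval μ c.base (c.vertex k)) → (∀ k, dist c.base (x k) ≤ r) →
      ∃ b, dist c.base b ≤ A * r ∧ ∀ k, dist (μ c.base (x k) b) (x k) ≤ B := by
  obtain ⟨K, hK, hmed⟩ := h.exists_dist_med_le hX
  let I := {i : CoarseCorner μ L ι × (ι → X) × ℝ // 1 ≤ i.2.2 ∧
    (∀ k, i.2.1 k ∈ cmInterval μ i.1.base (i.1.vertex k)) ∧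
    ∀ k, dist i.1.base (i.2.1 k) ≤ i.2.2}
  let z (i : I) := i.1.1.base
  let t (i : I) := i.1.1.top
  let x k (i : I) := i.1.2.1 k
  let IsLinear (q : h.CoarseFamily I) : Prop :=
    ∃ (f : I → X) (A : ℝ), h.coarseClass f = q ∧ ∀ i, dist (z i) (f i) ≤ A * i.1.2.2
  have isLinear_med : ∀ a b, IsLinear a → IsLinear b → IsLinear (med a (h.coarseClass t) b) := by
    rintro _ _ ⟨f, A, rfl, hf⟩ ⟨g, A', rfl, hg⟩
    refine ⟨_, K * (A + A' + 2), (med_coarseClass _ _ _).symm, fun i => ?_⟩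
    calc dist (z i) (μ (f i) (t i) (g i))
        ≤ K * (dist (z i) (f i) + dist (z i) (g i) + 2 * 1) :=
          (hmed _ _ _ _).trans_eq (by ring)
      _ ≤ K * (A * i.1.2.2 + A' * i.1.2.2 + 2 * i.1.2.2) := by
        gcongr
        exacts [hf i, hg i, i.2.1]
      _ = K * (A + A' + 2) * i.1.2.2 := by ring
  have hx : ∀ k, h.coarseClass (x k) ∈ cmInterval med (h.coarseClass z) (h.coarseClass t) :=
    fun k => mem_cmInterval_trans (coarseClass_mem_cmInterval fun i => i.2.2.1 k)
      (coarseClass_vertex_mem (fun i : I => i.1.1) k)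
  obtain ⟨_, ⟨b, A, rfl, hb⟩, hxb⟩ := exists_upper_bound_of_med_closed (P := IsLinear)
    ⟨z, 0, rfl, fun i => by rw [dist_self, zero_mul]⟩ isLinear_med hx
    fun k => ⟨x k, 1, rfl, fun i => (i.2.2.2 k).trans_eq (one_mul _).symm⟩
  choose B hB using fun k => coarseClass_mem_cmInterval_iff.1 (hxb k)
  obtain ⟨M, hM⟩ := Finite.exists_le B
  refine ⟨A, M, fun c x r hr hx hxr => ?_⟩
  let i : I := ⟨(c, x, r), hr, hx, hxr⟩
  exact ⟨b i, hb i, fun k => (hB k i).trans (hM k)⟩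

end IsCoarseMedianSpace

end Corner

section Growth

theorem card_pow_le_ncard_of_separated {α X ι J : Type*} [PseudoMetricSpace X] [Fintype ι]
    [Fintype J] {s : Set α} (hs : s.Finite) {B : ℝ} {f : ι → α → X} {y : ι → J → X}
    (hy : ∀ k i j, i ≠ j → 2 * B < dist (y k i) (y k j))
    (hf : ∀ c : ι → J, ∃ g ∈ s, ∀ k, dist (f k g) (y k (c k)) ≤ B) :
    Fintype.card J ^ Fintype.card ι ≤ s.ncard := by
  choose g hgs hg using hf
  have hinj : Function.Injective g := by
    intro c c' hcc'
    funext k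
    by_contra hne
    have hfar := hy k _ _ hne
    have hc := hg c k
    have hc' := hcc' ▸ hg c' k
    linarith [dist_triangle_left (y k (c k)) (y k (c' k)) (f k (g c))]
  classical
  calc Fintype.card J ^ Fintype.card ι = (Set.range g).ncard := by
        rw [← Set.image_univ, Set.ncard_image_of_injective _ hinj, Set.ncard_univ,
          Nat.card_eq_fintype_card, Fintype.card_fun]
    _ ≤ s.ncard := Set.ncard_le_ncard (Set.range_subset_iff.2 hgs) hs

namespace IsCoarseMedianSpace

variable {X ι : Type*} [MetricSpace X] [Fintype ι] {μ : X → X → X → X} {ρ : ℝ → ℝ} {κ₄ : ℝ}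

theorem exists_separated_ladder (h : IsCoarseMedianSpace μ ρ κ₄) (hX : IsLargeScaleGeodesic X)
    (B : ℝ) :
    ∃ D : ℝ, 1 ≤ D ∧ ∀ (a b : X) (m : ℕ), m * D ≤ dist a b →
      ∃ y : Fin (m + 1) → X, (∀ i, y i ∈ cmInterval μ a b) ∧
        ∀ i j, i ≠ j → 2 * B < dist (y i) (y j) := by
  obtain ⟨K, hK, hmid⟩ := h.exists_mem_cmInterval_dist_mem_Icc hX
  let D := 2 * |B| + K + 1
  refine ⟨D, le_add_of_nonneg_left (by positivity), fun a b m hm => ?_⟩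
  have hrung : ∀ j : Fin (m + 1), ∃ y ∈ cmInterval μ a b,
      dist a y ∈ Set.Icc (j * D) (j * D + K) := fun j => by
    refine hmid a b _ (by positivity) (le_trans ?_ hm)
    gcongr
    exact j.is_le
  choose y hy hdist using hrung
  refine ⟨y, hy, fun i j hij => ?_⟩
  wlog hlt : i < j generalizing i j
  · rw [dist_comm]
    exact this j i hij.symm (lt_of_le_of_ne (not_lt.1 hlt) hij.symm)
  have hgap : (i : ℝ) * D + D ≤ j * D := by
    rw [← add_one_mul]
    gcongr
    exact_mod_cast hlt
  have htri := dist_triangle a (y i) (y j)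
  have hi := (hdist i).2
  have hj := (hdist j).1
  linarith [le_abs_self B, show D = 2 * |B| + K + 1 from rfl]

theorem exists_large_cmInterval (h : IsCoarseMedianSpace μ ρ κ₄) (hX : IsLargeScaleGeodesic X)
    (hfin : ∀ a b : X, (cmInterval μ a b).Finite) [Nonempty ι] (L : ℝ) :
    ∃ D G : ℝ, 0 < D ∧ 0 < G ∧ ∀ (c : CoarseCorner μ L ι) (m : ℕ),
      (∀ k, m * D ≤ dist c.base (c.vertex k)) →
      ∃ b, m ≤ G * (dist c.base b + 1) ∧ dist c.base b ≤ G * (m + 1) ∧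
        (m + 1) ^ Fintype.card ι ≤ (cmInterval μ c.base b).ncard := by
  obtain ⟨K, hK, hmid⟩ := h.exists_mem_cmInterval_dist_mem_Icc hX
  obtain ⟨K', hK', hproj⟩ := h.exists_dist_le_add_dist_med hX
  obtain ⟨A, B, hupper⟩ := h.exists_coarse_upper_bound (ι := ι) hX L
  obtain ⟨B', hcoord⟩ := h.exists_mem_cmInterval_with_coordinates (ι := ι) L B
  obtain ⟨D, hD, hladder⟩ := h.exists_separated_ladder hX B'
  let G₁ := K' + |B|
  let G₂ := |A| * (D + K + 1)
  have hG₁ : 0 ≤ G₁ := by positivity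
  have hG₂ : 0 ≤ G₂ := by positivity
  refine ⟨D, G₁ + G₂ + 1, by positivity, by positivity, fun c m hm => ?_⟩
  choose x hx hdist using fun k => hmid c.base (c.vertex k) (m * D) (by positivity) (hm k)
  choose y hy hsep using fun k => hladder c.base (x k) m (hdist k).1
  obtain ⟨b, hb, hxb⟩ := hupper c x (m * D + K + 1) (le_add_of_nonneg_left (by positivity)) hx
    fun k => (hdist k).2.trans (lt_add_one _).le
  have hd : 0 ≤ dist c.base b := dist_nonneg
  have hm₀ : (0 : ℝ) ≤ m := m.cast_nonneg
  refine ⟨b, ?_, ?_, ?_⟩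
  · obtain ⟨k⟩ := ‹Nonempty ι›
    calc (m : ℝ) ≤ m * D := le_mul_of_one_le_right hm₀ hD
      _ ≤ dist c.base (x k) := (hdist k).1
      _ ≤ K' * (dist c.base b + 1) + |B| :=
        (hproj _ _ _).trans (add_le_add_right ((hxb k).trans (le_abs_self B)) _)
      _ ≤ G₁ * (dist c.base b + 1) := by nlinarith [mul_nonneg (abs_nonneg B) hd]
      _ ≤ (G₁ + G₂ + 1) * (dist c.base b + 1) := by nlinarith
  · calc dist c.base b ≤ A * (m * D + K + 1) := hb
      _ ≤ |A| * ((D + K + 1) * (m + 1)) := by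
        gcongr
        · exact le_abs_self A
        · nlinarith
      _ = G₂ * (m + 1) := (mul_assoc _ _ _).symm
      _ ≤ (G₁ + G₂ + 1) * (m + 1) := by nlinarith
  · simpa only [Fintype.card_fin] using card_pow_le_ncard_of_separated (hfin c.base b)
      (f := fun k g => μ c.base g (c.vertex k)) hsep fun i =>
        hcoord c x (fun k => y k (i k)) b hx (fun k => hy k (i k)) hxb

theorem exists_short_edge (h : IsCoarseMedianSpace μ ρ κ₄) (hX : IsLargeScaleGeodesic X)
    (hfin : ∀ a b : X, (cmInterval μ a b).Finite) [Nonempty ι] {p : ℝ → ℝ}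
    (hp : Filter.Tendsto (fun r => p r / r ^ Fintype.card ι) Filter.atTop (nhds 0))
    (hcard : ∀ a b : X, ((cmInterval μ a b).ncard : ℝ) ≤ p (dist a b)) (L : ℝ) :
    ∃ C : ℝ, 0 < C ∧ ∀ c : CoarseCorner μ L ι, ∃ k, dist c.base (c.vertex k) ≤ C := by
  obtain ⟨D, G, hD, hG, hlarge⟩ := h.exists_large_cmInterval (ι := ι) hX hfin L
  have hsmall : ∀ᶠ r in Filter.atTop, p r / r ^ Fintype.card ι < (G⁻¹) ^ Fintype.card ι :=
    hp.eventually_lt_const (by positivity)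
  obtain ⟨R, hR⟩ := Filter.eventually_atTop.1 hsmall
  obtain ⟨m, hm⟩ := exists_nat_ge (G * (max R 1 + 1))
  refine ⟨m * D + 1, by positivity, fun c => ?_⟩
  by_contra! hlong
  obtain ⟨b, hlower, hupper, hncard⟩ := hlarge c m fun k => ((lt_add_one _).trans (hlong k)).le
  set d := dist c.base b
  have hd : max R 1 ≤ d := by
    simpa only [add_le_add_iff_right] using le_of_mul_le_mul_left (hm.trans hlower) hG
  have hd₀ : 0 < d := zero_lt_one.trans_le ((le_max_right _ _).trans hd)
  have hlt := calc ((m : ℝ) + 1) ^ Fintype.card ι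
      ≤ (cmInterval μ c.base b).ncard := by exact_mod_cast hncard
    _ ≤ p d := hcard c.base b
    _ < G⁻¹ ^ Fintype.card ι * d ^ Fintype.card ι :=
      (div_lt_iff₀ (by positivity)).1 (hR d ((le_max_left _ _).trans hd))
    _ = (G⁻¹ * d) ^ Fintype.card ι := (mul_pow _ _ _).symm
    _ ≤ (m + 1) ^ Fintype.card ι := by
      gcongr
      exact (inv_mul_le_iff₀ hG).2 hupper
  exact lt_irrefl _ hlt

end IsCoarseMedianSpace

end Growth

theorem stmt14_general {X : Type*} [MetricSpace X] (μ : X → X → X → X) (ρ : ℝ → ℝ) (κ₄ : ℝ)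
    (h : IsCoarseMedianSpace μ ρ κ₄) (hX : IsLargeScaleGeodesic X)
    (hfin : ∀ a b : X, (cmInterval μ a b).Finite) (n : ℕ) (p : ℝ → ℝ)
    (hp : Filter.Tendsto (fun r => p r / r ^ (n + 1)) Filter.atTop (nhds 0))
    (hcard : ∀ a b : X, ((cmInterval μ a b).ncard : ℝ) ≤ p (dist a b)) (L : ℝ) :
    ∃ C : ℝ, 0 < C ∧ ∀ σ : (Fin (n + 1) → Bool) → X, IsCubeQuasiMorphism μ L σ →
      ∃ i, dist (σ fun j => if j = i then true else false) (σ fun _ => false) ≤ C := by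
  obtain ⟨C, hC, hshort⟩ := h.exists_short_edge (ι := Fin (n + 1)) hX hfin
    (by rwa [Fintype.card_fin]) hcard L
  refine ⟨C, hC, fun σ hσ => (hshort hσ.corner).imp fun i hi => ?_⟩
  rwa [dist_comm]

/-- a uniformly discrete, quasi-geodesic coarse median space with
bounded geometry whose intervals grow slower than `r^{n+1}` has rank at most
`n`, in the coarse-cube sense: images of `(n+1)`-cubes have an edge at the
origin of uniformly bounded length. -/
theorem stmt14 {X : Type*} [MetricSpace X] (μ : X → X → X → X)
    (ρ : ℝ → ℝ) (κ₄ : ℝ) (h : IsCoarseMedianSpace μ ρ κ₄)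
    -- uniformly discrete:
    (hud : ∃ ε : ℝ, 0 < ε ∧ ∀ x y : X, x ≠ y → ε < dist x y)
    -- bounded geometry:
    (hbg : ∀ r : ℝ, 0 < r → ∃ N : ℕ, ∀ x : X,
      (Metric.closedBall x r).Finite ∧ (Metric.closedBall x r).ncard ≤ N)
    -- quasi-geodesic:
    (hqg : ∃ L C : ℝ, 0 < L ∧ 0 < C ∧ ∀ x y : X, ∃ γ : ℝ → X,
      γ 0 = x ∧ γ (dist x y) = y ∧
      ∀ s ∈ Set.Icc (0 : ℝ) (dist x y), ∀ t ∈ Set.Icc (0 : ℝ) (dist x y),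
        L⁻¹ * |s - t| - C ≤ dist (γ s) (γ t) ∧ dist (γ s) (γ t) ≤ L * |s - t| + C)
    (n : ℕ) (p : ℝ → ℝ)
    -- p(r)/r^{n+1} → 0 as r → ∞:
    (hp : Filter.Tendsto (fun r : ℝ => p r / r ^ (n + 1)) Filter.atTop (nhds 0))
    -- card [a,b] ≤ p(d(a,b)):
    (hcard : ∀ a b : X, ((cmInterval μ a b).ncard : ℝ) ≤ p (dist a b)) :
    ∀ L : ℝ, 0 < L → ∃ C : ℝ, 0 < C ∧
      ∀ σ : (Fin (n + 1) → Bool) → X,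
        (∀ u v w : Fin (n + 1) → Bool,
          dist (μ (σ u) (σ v) (σ w)) (σ (cubeMedian u v w)) ≤ L) →
        ∃ i : Fin (n + 1),
          dist (σ (fun j => if j = i then true else false)) (σ (fun _ => false)) ≤ C := by
  obtain ⟨Λ, C, hΛ, hC, hpath⟩ := hqg
  have hX : IsLargeScaleGeodesic X := isLargeScaleGeodesic_of_coarseLipschitz_paths hΛ.le hC.le
    fun x y => (hpath x y).imp fun γ hγ => ⟨hγ.1, hγ.2.1, fun s hs t ht => (hγ.2.2 s hs t ht).2⟩
  have hfin := h.cmInterval_finite fun r hr x => ((hbg r hr).choose_spec x).1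
  exact fun L _ => stmt14_general μ ρ κ₄ h hX hfin n p hp hcard L
end

section
/- Let (X,ν) be a ternary algebra satisfying (T1) ν(a,a,x) = ν(a,x,a) = a for all a,x, (T2) ν(a,x,b) = ν(b,x,a) for all a,x,b, and the finite interval chain condition. Then (X,ν) has bounded valency if and only if the induced metric d_ν has bounded geometry. -/
/-- The cost `Σ (card [x_{i-1}, x_i] − 1)` of a chain `x₀, x₁, …, x_n`. -/
noncomputable def chainCost {X : Type*} (μ : X → X → X → X) : List X → ℕ
  | [] => 0
  | [_] => 0
  | x :: y :: rest => ((cmInterval μ x y).ncard - 1) + chainCost μ (y :: rest)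

/-- `l` is a chain from `a` to `b`: it starts at `a` and ends at `b`. -/
def IsChainFrom {X : Type*} (a b : X) (l : List X) : Prop :=
  l.head? = some a ∧ l.getLast? = some b

/-- All consecutive intervals along the chain `l` are finite. -/
def FiniteIntervalChain {X : Type*} (μ : X → X → X → X) (l : List X) : Prop :=
  ∀ p ∈ l.zip l.tail, (cmInterval μ p.1 p.2).Finite

/-- The induced metric associated to a ternary operator: the minimum of
`Σ (card [x_{i-1}, x_i] − 1)` over all finite-interval chains from `a`
to `b`. -/
noncomputable def inducedDist {X : Type*} (μ : X → X → X → X) (a b : X) : ℕ :=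
  sInf {m : ℕ | ∃ l : List X,
    IsChainFrom a b l ∧ FiniteIntervalChain μ l ∧ chainCost μ l = m}

/-- A ternary algebra has bounded valency if the number of points `y` whose
interval `[x,y]` has at most `R` points is uniformly bounded by `φ R`. -/
def BoundedValency {X : Type*} (μ : X → X → X → X) : Prop :=
  ∃ φ : ℕ → ℕ, ∀ (x : X) (R : ℕ),
    {y : X | (cmInterval μ x y).Finite ∧ (cmInterval μ x y).ncard ≤ R}.Finite ∧
    {y : X | (cmInterval μ x y).Finite ∧ (cmInterval μ x y).ncard ≤ R}.ncard ≤ φ R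

/-!
A minimal chain from `x` to a point `y ≠ x` leaves `x` at some first stage, to a point `z ≠ x` with
`[x,z]` finite and `card [x,z] - 1 + d(z,y) ≤ d(x,y)`. As `[x,z]` contains the two points `x` and
`z`, this bounds `card [x,z]` by `d(x,y) + 1` and gives `d(z,y) < d(x,y)`. So an open ball of
radius `r + 1` is covered by its centre and the open balls of radius `r` around the boundedly many
`z` with `card [x,z] ≤ r + 1`, and induction on `r` bounds its cardinality. Conversely the two-point
chain gives `d(x,y) ≤ card [x,y] - 1`.
-/

section UniformlyFinite

variable {ι κ α : Type*}

/-- A family of sets is uniformly finite if a single natural number bounds the cardinality of all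
its members; bounded valency and bounded geometry both say this of families of balls. Finiteness is
asked for separately because `Set.ncard` is `0` on infinite sets. -/
def UniformlyFinite (S : ι → Set α) : Prop :=
  ∃ N : ℕ, ∀ i, (S i).Finite ∧ (S i).ncard ≤ N

namespace UniformlyFinite

theorem mono {S T : ι → Set α} (hT : UniformlyFinite T) (hST : ∀ i, S i ⊆ T i) :
    UniformlyFinite S := by
  obtain ⟨N, hN⟩ := hT
  exact ⟨N, fun i => ⟨(hN i).1.subset (hST i),
    (Set.ncard_le_ncard (hST i) (hN i).1).trans (hN i).2⟩⟩

theorem empty : UniformlyFinite fun _ : ι => (∅ : Set α) :=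
  ⟨0, fun _ => ⟨Set.finite_empty, (Set.ncard_empty α).le⟩⟩

theorem insert {S : ι → Set α} (hS : UniformlyFinite S) (f : ι → α) :
    UniformlyFinite fun i => Insert.insert (f i) (S i) := by
  obtain ⟨N, hN⟩ := hS
  exact ⟨N + 1, fun i => ⟨(hN i).1.insert (f i),
    (Set.ncard_insert_le _ _).trans (Nat.add_le_add_right (hN i).2 1)⟩⟩

theorem biUnion {S : ι → Set κ} {T : κ → Set α} (hS : UniformlyFinite S)
    (hT : UniformlyFinite T) : UniformlyFinite fun i => ⋃ k ∈ S i, T k := by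
  obtain ⟨M, hM⟩ := hS
  obtain ⟨N, hN⟩ := hT
  refine ⟨M * N, fun i => ?_⟩
  obtain ⟨hfin, hcard⟩ := hM i
  refine ⟨hfin.biUnion fun k _ => (hN k).1, ?_⟩
  calc (⋃ k ∈ S i, T k).ncard
      = (⋃ k ∈ hfin.toFinset, T k).ncard := by simp only [Set.Finite.mem_toFinset]
    _ ≤ ∑ k ∈ hfin.toFinset, (T k).ncard := hfin.toFinset.set_ncard_biUnion_le T
    _ ≤ hfin.toFinset.card * N := Finset.sum_le_card_nsmul _ _ _ fun k _ => (hN k).2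
    _ = (S i).ncard * N := by rw [Set.ncard_eq_toFinset_card _ hfin]
    _ ≤ M * N := Nat.mul_le_mul_right N hcard

end UniformlyFinite

end UniformlyFinite

section Chains

variable {X : Type*} {ν : X → X → X → X} {a b x y : X} {l : List X}

theorem isChainFrom_cons_cons :
    IsChainFrom a b (x :: y :: l) ↔ x = a ∧ IsChainFrom y b (y :: l) := by
  simp [IsChainFrom]

theorem finiteIntervalChain_cons_cons :
    FiniteIntervalChain ν (x :: y :: l) ↔
      (cmInterval ν x y).Finite ∧ FiniteIntervalChain ν (y :: l) := by
  simp [FiniteIntervalChain]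

theorem finiteIntervalChain_pair :
    FiniteIntervalChain ν [x, y] ↔ (cmInterval ν x y).Finite := by
  simp [FiniteIntervalChain]

theorem inducedDist_le_chainCost (hl : IsChainFrom x y l) (hfin : FiniteIntervalChain ν l) :
    inducedDist ν x y ≤ chainCost ν l :=
  Nat.sInf_le ⟨l, hl, hfin, rfl⟩

theorem exists_chainCost_eq_inducedDist
    (h : ∃ l : List X, IsChainFrom x y l ∧ FiniteIntervalChain ν l) :
    ∃ l : List X, IsChainFrom x y l ∧ FiniteIntervalChain ν l ∧
      chainCost ν l = inducedDist ν x y := by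
  obtain ⟨l, hl, hfin⟩ := h
  exact Nat.sInf_mem
    (s := {m | ∃ l, IsChainFrom x y l ∧ FiniteIntervalChain ν l ∧ chainCost ν l = m})
    ⟨chainCost ν l, l, hl, hfin, rfl⟩

theorem inducedDist_le_ncard_cmInterval_sub_one (h : (cmInterval ν x y).Finite) :
    inducedDist ν x y ≤ (cmInterval ν x y).ncard - 1 :=
  inducedDist_le_chainCost (l := [x, y]) ⟨rfl, rfl⟩ (finiteIntervalChain_pair.2 h)

theorem exists_ne_ncard_add_inducedDist_le_chainCost (hxy : x ≠ y) (hl : IsChainFrom x y l)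
    (hfin : FiniteIntervalChain ν l) :
    ∃ z ≠ x, (cmInterval ν x z).Finite ∧
      (cmInterval ν x z).ncard - 1 + inducedDist ν z y ≤ chainCost ν l := by
  induction l with
  | nil => simp [IsChainFrom] at hl
  | cons w l ih =>
    cases l with
    | nil =>
      have hends : w = x ∧ w = y := by simpa [IsChainFrom] using hl
      exact absurd (hends.1.symm.trans hends.2) hxy
    | cons z l =>
      obtain ⟨rfl, hzy⟩ := isChainFrom_cons_cons.1 hl
      obtain ⟨hwz, hfin'⟩ := finiteIntervalChain_cons_cons.1 hfin
      by_cases hz : z = w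
      · subst hz
        obtain ⟨u, hu, huz, hle⟩ := ih hzy hfin'
        exact ⟨u, hu, huz, hle.trans (Nat.le_add_left _ _)⟩
      · exact ⟨z, hz, hwz, Nat.add_le_add_left (inducedDist_le_chainCost hzy hfin') _⟩

theorem exists_ne_ncard_add_inducedDist_le (hxy : x ≠ y)
    (h : ∃ l : List X, IsChainFrom x y l ∧ FiniteIntervalChain ν l) :
    ∃ z ≠ x, (cmInterval ν x z).Finite ∧
      (cmInterval ν x z).ncard - 1 + inducedDist ν z y ≤ inducedDist ν x y := by
  obtain ⟨l, hl, hfin, hcost⟩ := exists_chainCost_eq_inducedDist h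
  exact hcost ▸ exists_ne_ncard_add_inducedDist_le_chainCost hxy hl hfin

end Chains

section Valency

variable {X : Type*} {ν : X → X → X → X}

/-- The points `y` whose interval `[x,y]` has at most `R` elements: the sets whose size is
controlled by bounded valency. -/
def intervalBall (ν : X → X → X → X) (x : X) (R : ℕ) : Set X :=
  {y | (cmInterval ν x y).Finite ∧ (cmInterval ν x y).ncard ≤ R}

theorem boundedValency_iff_uniformlyFinite_intervalBall :
    BoundedValency ν ↔ ∀ R, UniformlyFinite fun x => intervalBall ν x R := by
  constructor
  · rintro ⟨φ, hφ⟩ R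
    exact ⟨φ R, fun x => hφ x R⟩
  · intro h
    choose φ hφ using h
    exact ⟨φ, fun x R => hφ R x⟩

theorem intervalBall_subset_inducedDist_le (x : X) (R : ℕ) :
    intervalBall ν x R ⊆ {y | inducedDist ν x y ≤ R} := fun _ hy =>
  (inducedDist_le_ncard_cmInterval_sub_one hy.1).trans ((Nat.sub_le _ 1).trans hy.2)

theorem inducedDist_lt_succ_subset
    (left_mem : ∀ a b : X, a ∈ cmInterval ν a b) (right_mem : ∀ a b : X, b ∈ cmInterval ν a b)
    (ficc : ∀ a b : X, ∃ l : List X, IsChainFrom a b l ∧ FiniteIntervalChain ν l)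
    (x : X) (r : ℕ) :
    {y | inducedDist ν x y < r + 1} ⊆
      insert x (⋃ z ∈ intervalBall ν x (r + 1), {y | inducedDist ν z y < r}) := by
  intro y (hy : inducedDist ν x y < r + 1)
  obtain rfl | hxy := eq_or_ne x y
  · exact Set.mem_insert _ _
  · obtain ⟨z, hzx, hfin, hle⟩ := exists_ne_ncard_add_inducedDist_le hxy (ficc x y)
    have hcard : 1 < (cmInterval ν x z).ncard :=
      (Set.one_lt_ncard hfin).2 ⟨x, left_mem x z, z, right_mem x z, hzx.symm⟩
    have hz : z ∈ intervalBall ν x (r + 1) := ⟨hfin, by lia⟩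
    have hzy : inducedDist ν z y < r := by lia
    exact Set.mem_insert_of_mem _ (Set.mem_biUnion hz hzy)

theorem BoundedValency.uniformlyFinite_inducedDist_lt (hν : BoundedValency ν)
    (left_mem : ∀ a b : X, a ∈ cmInterval ν a b) (right_mem : ∀ a b : X, b ∈ cmInterval ν a b)
    (ficc : ∀ a b : X, ∃ l : List X, IsChainFrom a b l ∧ FiniteIntervalChain ν l) (r : ℕ) :
    UniformlyFinite fun x => {y | inducedDist ν x y < r} := by
  induction r with
  | zero => simpa only [Nat.not_lt_zero, Set.ofPred_false] using UniformlyFinite.empty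
  | succ r ih =>
    have hvalency := boundedValency_iff_uniformlyFinite_intervalBall.1 hν (r + 1)
    exact ((hvalency.biUnion ih).insert id).mono
      fun x => inducedDist_lt_succ_subset left_mem right_mem ficc x r

theorem boundedValency_of_uniformlyFinite_inducedDist_le
    (h : ∀ r, UniformlyFinite fun x => {y | inducedDist ν x y ≤ r}) : BoundedValency ν :=
  boundedValency_iff_uniformlyFinite_intervalBall.2 fun R =>
    (h R).mono fun x => intervalBall_subset_inducedDist_le x R

end Valency

theorem stmt18_general {X : Type*} (ν : X → X → X → X)
    (left_mem : ∀ a b : X, a ∈ cmInterval ν a b) (right_mem : ∀ a b : X, b ∈ cmInterval ν a b)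
    (ficc : ∀ a b : X, ∃ l : List X, IsChainFrom a b l ∧ FiniteIntervalChain ν l) :
    BoundedValency ν ↔ ∀ r : ℕ, UniformlyFinite fun x => {y : X | inducedDist ν x y ≤ r} := by
  refine ⟨fun hν r => ?_, boundedValency_of_uniformlyFinite_inducedDist_le⟩
  simpa only [Nat.lt_succ_iff] using
    hν.uniformlyFinite_inducedDist_lt left_mem right_mem ficc (r + 1)

/-- for a ternary algebra satisfying (T1), (T2) and the finite
interval chain condition, bounded valency is equivalent to the induced metric
`d_ν` having bounded geometry. -/
theorem stmt18 {X : Type*} (ν : X → X → X → X)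
    (T1 : ∀ a x : X, ν a a x = a ∧ ν a x a = a)
    (T2 : ∀ a x b : X, ν a x b = ν b x a)
    -- finite interval chain condition:
    (ficc : ∀ a b : X, ∃ l : List X, IsChainFrom a b l ∧ FiniteIntervalChain ν l) :
    BoundedValency ν ↔
    (∀ r : ℕ, ∃ N : ℕ, ∀ x : X,
      {y : X | inducedDist ν x y ≤ r}.Finite ∧
      {y : X | inducedDist ν x y ≤ r}.ncard ≤ N) :=
  stmt18_general ν (fun a b => ⟨a, (T1 a b).1.symm⟩) (fun a b => ⟨b, by rw [T2, (T1 b a).1]⟩) ficc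
end
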